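/- (Hessian oscillation decay) Let F : Sym(n) → ℝ be concave, satisfy F(0) = 0, and be uniformly elliptic in the sense that λ‖N‖ ≤ F(M + N) − F(M) ≤ Λ‖N‖ for all M ∈ Sym(n) and all positive semidefinite N ∈ Sym(n). There exists ρ₀ ∈ (0,1) depending only on n, λ, Λ such that: if u ∈ C²(B₁) satisfies F(D²u(x)) = 0 for all x ∈ B₁ and the Hessian map 𝓗 := D²u : B₁ → Sym(n) satisfies diam 𝓗(B₁) = 1, then diam 𝓗(B_{ρ₀}) < 1/2, where diam is taken with respect to the norm on Sym(n). -/

import Mathlib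

open MeasureTheory Metric Set Filter
open scoped ENNReal NNReal Topology

noncomputable section

/-- Euclidean space `ℝⁿ`. -/
abbrev En (n : ℕ) := EuclideanSpace ℝ (Fin n)

/-- Real `n × n` matrices. -/
abbrev Mat (n : ℕ) := Matrix (Fin n) (Fin n) ℝ

/-- The `L²` operator norm of a matrix. -/
def opNorm {n : ℕ} (M : Mat n) : ℝ := ‖Matrix.toEuclideanCLM (𝕜 := ℝ) M‖

/-- The second partial derivative `∂_{ij} u (x)`. -/
def pd2 {n : ℕ} (u : En n → ℝ) (i j : Fin n) (x : En n) : ℝ :=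
  fderiv ℝ (fun y => fderiv ℝ u y (EuclideanSpace.single i 1)) x (EuclideanSpace.single j 1)

/-- The Hessian matrix `D²u(x)`. -/
def hessian {n : ℕ} (u : En n → ℝ) (x : En n) : Mat n :=
  Matrix.of fun i j => pd2 u i j x

/-- `F` is uniformly elliptic on symmetric matrices:
`λ‖N‖ ≤ F(M + N) − F(M) ≤ Λ‖N‖` for all symmetric `M` and positive semidefinite `N`. -/
def UnifEllipticOperator {n : ℕ} (lam Lam : ℝ) (F : Mat n → ℝ) : Prop :=
  ∀ M N : Mat n, M.IsSymm → N.IsSymm → N.PosSemidef →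
    lam * opNorm N ≤ F (M + N) - F M ∧ F (M + N) - F M ≤ Lam * opNorm N

/-- `F` is concave on the space of symmetric matrices. -/
def ConcaveOnSym {n : ℕ} (F : Mat n → ℝ) : Prop :=
  ∀ M N : Mat n, M.IsSymm → N.IsSymm → ∀ t : ℝ, t ∈ Set.Icc (0 : ℝ) 1 →
    t * F M + (1 - t) * F N ≤ F (t • M + (1 - t) • N)

/-- The diameter of the image of the Hessian map `𝓗 = D²u` over `S`, with respect to the
operator norm on symmetric matrices. -/
def hessDiam {n : ℕ} (u : En n → ℝ) (S : Set (En n)) : ℝ :=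
  sSup {d : ℝ | ∃ x ∈ S, ∃ y ∈ S, d = opNorm (hessian u x - hessian u y)}

/-!
Fix a unit vector `e`. Since `F` is concave and `F(D²u)` is constant, any constant minus the second
difference of `u` in the direction `e` is a supersolution for the extremal operator of the
ellipticity class. Nonnegative supersolutions satisfy a weak Harnack inequality: the points of
contact with paraboloids sliding from below form a set of measure bounded below (area formula for
the vertex map), a radial barrier propagates contact to nearby balls, and a Vitali covering iterates
this until the contact set, on which the supersolution is controlled by its value at one point,
fills almost the whole ball.

If `D²u` still oscillates by more than `σ` on a ball, ellipticity provides, at each point of the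
ball, a direction `e` in a fixed finite net for which `∂²u/∂e²` lies below its upper bound by a
multiple of `σ`. By pigeonhole one direction of the net serves on a set of definite measure, and
the weak Harnack inequality then lowers the upper bound of `∂²u/∂e²` on a ball `20` times smaller.
Each direction of the net has only the initial oscillation to lose, so this happens boundedly often.
-/

section SecondDerivative

variable {E : Type*} [NormedAddCommGroup E] [NormedSpace ℝ E] {u v : E → ℝ} {x : E}

/-- The second derivative `D²u(x)(z, z)` of `u` at `x` in the direction `z`. -/
def secondDeriv (u : E → ℝ) (x z : E) : ℝ := fderiv ℝ (fderiv ℝ u) x z z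

theorem secondDeriv_eq_iteratedFDeriv (u : E → ℝ) (x z : E) :
    secondDeriv u x z = iteratedFDeriv ℝ 2 u x fun _ ↦ z := by
  simp [secondDeriv, iteratedFDeriv_two_apply]

theorem secondDeriv_add (hu : ContDiffAt ℝ 2 u x) (hv : ContDiffAt ℝ 2 v x) (z : E) :
    secondDeriv (fun y ↦ u y + v y) x z = secondDeriv u x z + secondDeriv v x z := by
  simp [secondDeriv_eq_iteratedFDeriv, fun_iteratedFDeriv_add_apply (i := 2) hu hv]

theorem secondDeriv_sub (hu : ContDiffAt ℝ 2 u x) (hv : ContDiffAt ℝ 2 v x) (z : E) :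
    secondDeriv (fun y ↦ u y - v y) x z = secondDeriv u x z - secondDeriv v x z := by
  simp [secondDeriv_eq_iteratedFDeriv, fun_iteratedFDeriv_sub_apply (i := 2) hu hv]

theorem secondDeriv_const_mul (hu : ContDiffAt ℝ 2 u x) (c : ℝ) (z : E) :
    secondDeriv (fun y ↦ c * u y) x z = c * secondDeriv u x z := by
  simp only [secondDeriv_eq_iteratedFDeriv, ← smul_eq_mul]
  rw [iteratedFDeriv_const_smul_apply' (i := 2) hu]
  simp

theorem secondDeriv_const_sub (hu : ContDiffAt ℝ 2 u x) (c : ℝ) (z : E) :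
    secondDeriv (fun y ↦ c - u y) x z = -secondDeriv u x z := by
  rw [secondDeriv_sub contDiffAt_const hu]
  simp [secondDeriv]

theorem secondDeriv_comp_add_right (u : E → ℝ) (p x z : E) :
    secondDeriv (fun y ↦ u (y + p)) x z = secondDeriv u (x + p) z := by
  simp [secondDeriv_eq_iteratedFDeriv, iteratedFDeriv_comp_add_right]

theorem secondDeriv_comp_sub (u : E → ℝ) (p x z : E) :
    secondDeriv (fun y ↦ u (y - p)) x z = secondDeriv u (x - p) z := by
  simp [secondDeriv_eq_iteratedFDeriv, iteratedFDeriv_comp_sub]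

theorem secondDeriv_smul (u : E → ℝ) (x : E) (t : ℝ) (z : E) :
    secondDeriv u x (t • z) = t ^ 2 * secondDeriv u x z := by
  simp only [secondDeriv, map_smul, smul_apply, smul_eq_mul]
  ring

theorem eventually_differentiableAt (hu : ContDiffAt ℝ 2 u x) :
    ∀ᶠ y in 𝓝 x, DifferentiableAt ℝ u y :=
  (hu.eventually (by simp)).mono fun _ hy ↦ hy.differentiableAt two_ne_zero

theorem differentiableAt_fderiv (hu : ContDiffAt ℝ 2 u x) : DifferentiableAt ℝ (fderiv ℝ u) x :=
  (hu.fderiv_right (m := 1) one_add_one_eq_two.le).differentiableAt one_ne_zero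

theorem continuousOn_secondDeriv {U : Set E} (hu : ∀ x ∈ U, ContDiffAt ℝ 2 u x) (z : E) :
    ContinuousOn (fun x ↦ secondDeriv u x z) U := fun x hx ↦
  ((((hu x hx).fderiv_right (m := 1) one_add_one_eq_two.le).fderiv_right (m := 0)
    (zero_add 1).le).continuousAt.clm_apply continuousAt_const |>.clm_apply
    continuousAt_const).continuousWithinAt

theorem secondDeriv_comp {φ : ℝ → ℝ} (hφ : ContDiffAt ℝ 2 φ (u x)) (hu : ContDiffAt ℝ 2 u x)
    (z : E) :
    secondDeriv (fun y ↦ φ (u y)) x z =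
      deriv (deriv φ) (u x) * fderiv ℝ u x z ^ 2 + deriv φ (u x) * secondDeriv u x z := by
  have hfderiv : fderiv ℝ (fun y ↦ φ (u y)) =ᶠ[𝓝 x] fun y ↦ deriv φ (u y) • fderiv ℝ u y := by
    filter_upwards [hu.continuousAt.eventually (eventually_differentiableAt hφ),
      eventually_differentiableAt hu] with y hφy huy
    exact (hφy.hasDerivAt.comp_hasFDerivAt y huy.hasFDerivAt).fderiv
  have hφ' : HasDerivAt (deriv φ) (deriv (deriv φ) (u x)) (u x) := by
    have : DifferentiableAt ℝ (deriv φ) (u x) :=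
      (differentiableAt_fderiv hφ).clm_apply (differentiableAt_const 1)
    exact this.hasDerivAt
  have hderiv : HasFDerivAt (fun y ↦ deriv φ (u y) • fderiv ℝ u y) _ x :=
    (hφ'.comp_hasFDerivAt x (hu.differentiableAt two_ne_zero).hasFDerivAt).fun_smul
      (differentiableAt_fderiv hu).hasFDerivAt
  rw [secondDeriv, hfderiv.fderiv_eq, hderiv.fderiv]
  simp only [Function.comp_apply, add_apply, smul_apply, ContinuousLinearMap.smulRight_apply,
    smul_eq_mul, secondDeriv]
  ring

theorem hasDerivAt_comp_add_smul {z : E} {s : ℝ} (hu : DifferentiableAt ℝ u (x + s • z)) :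
    HasDerivAt (fun s : ℝ ↦ u (x + s • z)) (fderiv ℝ u (x + s • z) z) s :=
  hu.hasFDerivAt.comp_hasDerivAt s
    (by simpa using ((hasDerivAt_id s).smul_const z).const_add x)

theorem hasDerivAt_fderiv_comp_add_smul {z : E} {s : ℝ} (hu : ContDiffAt ℝ 2 u (x + s • z)) :
    HasDerivAt (fun s : ℝ ↦ fderiv ℝ u (x + s • z) z) (secondDeriv u (x + s • z) z) s := by
  have hline : HasDerivAt (fun s : ℝ ↦ x + s • z) z s := by
    simpa using ((hasDerivAt_id s).smul_const z).const_add x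
  have hfderiv : HasDerivAt (fun s : ℝ ↦ fderiv ℝ u (x + s • z))
      (fderiv ℝ (fderiv ℝ u) (x + s • z) z) s :=
    (differentiableAt_fderiv hu).hasFDerivAt.comp_hasDerivAt s hline
  simpa [secondDeriv] using hfderiv.clm_apply (hasDerivAt_const s z)

theorem deriv_deriv_nonneg_of_isLocalMin {f : ℝ → ℝ} {s : ℝ} (hf : ContinuousAt f s)
    (hmin : IsLocalMin f s) : 0 ≤ deriv (deriv f) s := by
  by_contra! hneg
  have hmax : IsLocalMax f s := isLocalMax_of_deriv_deriv_neg hneg hmin.deriv_eq_zero hf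
  have hconst : f =ᶠ[𝓝 s] fun _ ↦ f s := by
    filter_upwards [hmax, hmin] with t htmax htmin using le_antisymm htmax htmin
  have hderiv : deriv f =ᶠ[𝓝 s] fun _ ↦ 0 := by simpa using hconst.deriv
  simp [hderiv.deriv_eq] at hneg

theorem secondDeriv_nonneg_of_isLocalMin (hu : ContDiffAt ℝ 2 u x) (hmin : IsLocalMin u x)
    (z : E) : 0 ≤ secondDeriv u x z := by
  have hline : Tendsto (fun s : ℝ ↦ x + s • z) (𝓝 0) (𝓝 x) := by
    simpa using (by fun_prop : Continuous fun s : ℝ ↦ x + s • z).tendsto 0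
  have hderiv : deriv (fun s : ℝ ↦ u (x + s • z)) =ᶠ[𝓝 0] fun s ↦ fderiv ℝ u (x + s • z) z :=
    (hline.eventually (eventually_differentiableAt hu)).mono fun s hs ↦
      (hasDerivAt_comp_add_smul hs).deriv
  have hderiv₂ : deriv (deriv fun s : ℝ ↦ u (x + s • z)) 0 = secondDeriv u x z := by
    rw [hderiv.deriv_eq, (hasDerivAt_fderiv_comp_add_smul (by simpa using hu)).deriv]
    simp
  rw [← hderiv₂]
  refine deriv_deriv_nonneg_of_isLocalMin
    (hu.continuousAt.comp_of_eq (by fun_prop) (by simp)) ?_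
  simpa [IsLocalMin, IsMinFilter] using hline.eventually hmin

/-- The symmetric second difference of `u` at `x` with increment `p`. -/
def secondDiff (u : E → ℝ) (p x : E) : ℝ := u (x + p) + u (x - p) - 2 * u x

theorem contDiffAt_secondDiff {p : E} (hu : ContDiffAt ℝ 2 u x)
    (hp : ContDiffAt ℝ 2 u (x + p)) (hm : ContDiffAt ℝ 2 u (x - p)) :
    ContDiffAt ℝ 2 (secondDiff u p) x := by
  have hp' : ContDiffAt ℝ 2 (fun y ↦ u (y + p)) x := hp.comp x (by fun_prop)
  have hm' : ContDiffAt ℝ 2 (fun y ↦ u (y - p)) x := hm.comp x (by fun_prop)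
  exact (hp'.add hm').sub (contDiffAt_const.mul hu)

theorem secondDeriv_secondDiff {p : E} (hu : ContDiffAt ℝ 2 u x)
    (hp : ContDiffAt ℝ 2 u (x + p)) (hm : ContDiffAt ℝ 2 u (x - p)) (z : E) :
    secondDeriv (secondDiff u p) x z =
      secondDeriv u (x + p) z + secondDeriv u (x - p) z - 2 * secondDeriv u x z := by
  have hp' : ContDiffAt ℝ 2 (fun y ↦ u (y + p)) x := hp.comp x (by fun_prop)
  have hm' : ContDiffAt ℝ 2 (fun y ↦ u (y - p)) x := hm.comp x (by fun_prop)
  unfold secondDiff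
  rw [secondDeriv_sub (hp'.add hm') (contDiffAt_const.mul hu), secondDeriv_add hp' hm',
    secondDeriv_const_mul hu, secondDeriv_comp_add_right, secondDeriv_comp_sub]

theorem secondDiff_le_of_secondDeriv_le {p : E} {S : ℝ}
    (hu : ∀ s ∈ Icc (-1 : ℝ) 1, ContDiffAt ℝ 2 u (x + s • p))
    (hS : ∀ s ∈ Icc (-1 : ℝ) 1, secondDeriv u (x + s • p) p ≤ S) : secondDiff u p x ≤ S := by
  let f : ℝ → ℝ := fun s ↦ u (x + s • p) - S / 2 * s ^ 2
  have hf : ∀ s ∈ Icc (-1 : ℝ) 1,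
      HasDerivAt f (fderiv ℝ u (x + s • p) p - S * s) s := fun s hs ↦ by
    refine ((hasDerivAt_comp_add_smul ((hu s hs).differentiableAt two_ne_zero)).fun_sub
      ((hasDerivAt_pow 2 s).const_mul (S / 2))).congr_deriv ?_
    push_cast
    ring
  have hf' : ∀ s ∈ Icc (-1 : ℝ) 1, HasDerivAt (fun s ↦ fderiv ℝ u (x + s • p) p - S * s)
      (secondDeriv u (x + s • p) p - S) s := fun s hs ↦ by
    simpa using (hasDerivAt_fderiv_comp_add_smul (hu s hs)).fun_sub
      ((hasDerivAt_id' s).const_mul S)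
  have hconcave : ConcaveOn ℝ (Icc (-1) 1) f :=
    concaveOn_of_hasDerivWithinAt2_nonpos (convex_Icc _ _)
      (fun s hs ↦ (hf s hs).continuousAt.continuousWithinAt)
      (fun s hs ↦ (hf s (interior_subset hs)).hasDerivWithinAt)
      (fun s hs ↦ (hf' s (interior_subset hs)).hasDerivWithinAt)
      fun s hs ↦ sub_nonpos.2 (hS s (interior_subset hs))
  have hmid : 1 / 2 * f (-1) + 1 / 2 * f 1 ≤ f 0 := by
    simpa using hconcave.2 (left_mem_Icc.2 (by norm_num)) (right_mem_Icc.2 (by norm_num))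
      (show (0 : ℝ) ≤ 1 / 2 by norm_num) (show (0 : ℝ) ≤ 1 / 2 by norm_num) (by norm_num)
  simp only [f, neg_smul, one_smul, zero_smul, add_zero, ← sub_eq_add_neg] at hmid
  rw [secondDiff]
  linarith

theorem le_secondDiff_of_le_secondDeriv {p : E} {m : ℝ}
    (hu : ∀ s ∈ Icc (-1 : ℝ) 1, ContDiffAt ℝ 2 u (x + s • p))
    (hm : ∀ s ∈ Icc (-1 : ℝ) 1, m ≤ secondDeriv u (x + s • p) p) : m ≤ secondDiff u p x := by
  have hneg := secondDiff_le_of_secondDeriv_le (u := fun y ↦ 0 - u y) (S := -m)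
    (fun s hs ↦ contDiffAt_const.sub (hu s hs)) fun s hs ↦ by
      rw [secondDeriv_const_sub (hu s hs)]
      exact neg_le_neg (hm s hs)
  simp only [secondDiff] at hneg ⊢
  linarith

end SecondDerivative

section TouchingParaboloids

variable {E : Type*} [NormedAddCommGroup E]

/-- `w` is of class `C²` at `x` and, whenever the eigenvalues of `D²w(x)` are bounded below by
`-t ≤ 0`, they are bounded above by `L * t`. This is the pointwise consequence of
`𝓜⁻(D²w(x)) ≤ 0`, with `𝓜⁻` the Pucci minimal operator, that the weak Harnack inequality uses. -/
structure IsSupersolutionAt [NormedSpace ℝ E] (L : ℝ) (w : E → ℝ) (x : E) : Prop where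
  contDiffAt : ContDiffAt ℝ 2 w x
  secondDeriv_le : ∀ t : ℝ, 0 ≤ t → (∀ z, -(t * ‖z‖ ^ 2) ≤ secondDeriv w x z) →
    ∀ z, secondDeriv w x z ≤ L * t * ‖z‖ ^ 2

/-- The sum of `w` and the paraboloid of opening `a` and vertex `y`. It attains a minimum where a
translate of the concave paraboloid `-a/2 * ‖· - y‖²` touches `w` from below. -/
def withParaboloid (w : E → ℝ) (a : ℝ) (y z : E) : ℝ := w z + a / 2 * ‖z - y‖ ^ 2

variable [InnerProductSpace ℝ E] {w : E → ℝ} {a L : ℝ} {x y : E}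

theorem fderiv_norm_sub_sq (x y : E) :
    fderiv ℝ (fun z ↦ ‖z - y‖ ^ 2) x = (2 : ℝ) • innerSL ℝ (x - y) := by
  rw [fderiv_comp_sub (f := fun z ↦ ‖z‖ ^ 2), fderiv_norm_sq_apply]
  ext z
  simp

theorem contDiff_norm_sub_sq (y : E) : ContDiff ℝ 2 fun z ↦ ‖z - y‖ ^ 2 :=
  (contDiff_id.sub contDiff_const).norm_sq ℝ

theorem secondDeriv_norm_sub_sq (x y z : E) :
    secondDeriv (fun z ↦ ‖z - y‖ ^ 2) x z = 2 * ‖z‖ ^ 2 := by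
  have hfderiv : fderiv ℝ (fun z ↦ ‖z - y‖ ^ 2) = fun x ↦ (2 : ℝ) • innerSL ℝ (x - y) :=
    funext fun x ↦ fderiv_norm_sub_sq x y
  have hderiv : HasFDerivAt (fun x : E ↦ (2 : ℝ) • innerSL ℝ (x - y)) ((2 : ℝ) • innerSL ℝ) x :=
    (((innerSL ℝ).hasFDerivAt).comp x ((hasFDerivAt_id x).sub_const y)).const_smul (2 : ℝ)
  rw [secondDeriv, hfderiv, hderiv.fderiv, ← real_inner_self_eq_norm_sq]
  rfl

theorem contDiffAt_withParaboloid (hw : ContDiffAt ℝ 2 w x) (a : ℝ) (y : E) :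
    ContDiffAt ℝ 2 (withParaboloid w a y) x :=
  hw.add (contDiffAt_const.mul (contDiff_norm_sub_sq y).contDiffAt)

theorem secondDeriv_withParaboloid (hw : ContDiffAt ℝ 2 w x) (a : ℝ) (y z : E) :
    secondDeriv (withParaboloid w a y) x z = secondDeriv w x z + a * ‖z‖ ^ 2 := by
  have hy := (contDiff_norm_sub_sq y).contDiffAt (x := x)
  unfold withParaboloid
  rw [secondDeriv_add hw (contDiffAt_const.mul hy), secondDeriv_const_mul hy,
    secondDeriv_norm_sub_sq]
  ring

theorem neg_le_secondDeriv_of_isLocalMin_withParaboloid (hw : ContDiffAt ℝ 2 w x)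
    (hmin : IsLocalMin (withParaboloid w a y) x) (z : E) :
    -(a * ‖z‖ ^ 2) ≤ secondDeriv w x z := by
  have := secondDeriv_nonneg_of_isLocalMin (contDiffAt_withParaboloid hw a y) hmin z
  rw [secondDeriv_withParaboloid hw] at this
  linarith

theorem gradient_eq_of_isLocalMin_withParaboloid [CompleteSpace E] (hw : DifferentiableAt ℝ w x)
    (hmin : IsLocalMin (withParaboloid w a y) x) : gradient w x = a • (y - x) := by
  have hfderiv : fderiv ℝ (withParaboloid w a y) x =
      fderiv ℝ w x + (a / 2) • (2 : ℝ) • innerSL ℝ (x - y) := by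
    have hy := ((contDiff_norm_sub_sq y).contDiffAt (x := x)).differentiableAt two_ne_zero
    unfold withParaboloid
    rw [fderiv_fun_add hw (hy.const_mul _), fderiv_const_mul hy, fderiv_norm_sub_sq]
  refine ext_inner_right ℝ fun z ↦ ?_
  have := DFunLike.congr_fun (hfderiv.symm.trans hmin.fderiv_eq_zero) z
  simp only [map_sub, add_apply, smul_apply, sub_apply, coe_innerSL_apply, smul_eq_mul,
    zero_apply] at this
  simp only [inner_gradient_left, inner_smul_left, Real.ringHom_apply, inner_sub_left]
  linarith

theorem withParaboloid_withParaboloid (w : E → ℝ) {a b : ℝ} (hab : a + b ≠ 0) (y₁ y₂ z : E) :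
    withParaboloid (withParaboloid w a y₁) b y₂ z =
      withParaboloid w (a + b) (AffineMap.lineMap y₁ y₂ (b / (a + b))) z +
        a * b / (2 * (a + b)) * ‖y₁ - y₂‖ ^ 2 := by
  have hz : z - AffineMap.lineMap y₁ y₂ (b / (a + b)) =
      (z - y₁) + (b / (a + b)) • (y₁ - y₂) := by
    rw [AffineMap.lineMap_apply_module', smul_sub, smul_sub]
    abel
  have hz₂ : z - y₂ = (z - y₁) + (y₁ - y₂) := by abel
  simp only [withParaboloid, hz, hz₂, norm_add_sq_real, inner_smul_right, norm_smul, mul_pow,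
    Real.norm_eq_abs, sq_abs]
  field_simp
  ring

theorem isMinOn_withParaboloid_withParaboloid {b : ℝ} {y₁ y₂ : E} {U : Set E} (hab : a + b ≠ 0) :
    IsMinOn (withParaboloid (withParaboloid w a y₁) b y₂) U x ↔
      IsMinOn (withParaboloid w (a + b) (AffineMap.lineMap y₁ y₂ (b / (a + b)))) U x := by
  simp only [isMinOn_iff, withParaboloid_withParaboloid w hab, add_le_add_iff_right]

theorem opNorm_le_of_abs_inner_le {T : E →L[ℝ] E} (hT : T.IsSymmetric) {C : ℝ} (hC : 0 ≤ C)
    (h : ∀ z, |inner ℝ (T z) z| ≤ C * ‖z‖ ^ 2) : ‖T‖ ≤ C := by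
  rw [T.norm_eq_iSup_rayleighQuotient hT]
  refine ciSup_le fun z ↦ ?_
  rw [ContinuousLinearMap.rayleighQuotient, T.reApplyInnerSelf_apply, RCLike.re_to_real, abs_div,
    abs_sq]
  exact div_le_of_le_mul₀ (sq_nonneg _) hC (h z)

theorem exists_hasFDerivAt_gradient [CompleteSpace E] (hw : ContDiffAt ℝ 2 w x) :
    ∃ T : E →L[ℝ] E, T.IsSymmetric ∧ HasFDerivAt (gradient w) T x ∧
      ∀ z, inner ℝ (T z) z = secondDeriv w x z := by
  -- `toDual.symm` is conjugate-linear, which over `ℝ` has to be turned into linear by hand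
  let riesz : StrongDual ℝ E →L[ℝ] E :=
    LinearMap.mkContinuous
      { toFun := (InnerProductSpace.toDual ℝ E).symm
        map_add' := map_add _
        map_smul' := fun c l ↦ by simp } 1 fun l ↦ by simp
  have hriesz (l : StrongDual ℝ E) (z : E) : inner ℝ (riesz l) z = l z :=
    InnerProductSpace.toDual_symm_apply
  refine ⟨riesz.comp (fderiv ℝ (fderiv ℝ w) x), fun z z' ↦ ?_,
    riesz.hasFDerivAt.comp x (differentiableAt_fderiv hw).hasFDerivAt, fun z ↦ hriesz _ _⟩
  exact (hriesz _ _).trans <| (hw.isSymmSndFDerivAt (by simp) z z').trans <|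
    (hriesz _ _).symm.trans (real_inner_comm _ _)

theorem exists_hasFDerivAt_vertexMap [CompleteSpace E] (ha : 0 < a) (hL : 0 ≤ L)
    (hw : IsSupersolutionAt L w x) (hmin : IsLocalMin (withParaboloid w a y) x) :
    ∃ T : E →L[ℝ] E, HasFDerivAt (fun z ↦ z + a⁻¹ • gradient w z) T x ∧ ‖T‖ ≤ 1 + L := by
  obtain ⟨T, hTsymm, hT, hTw⟩ := exists_hasFDerivAt_gradient hw.contDiffAt
  refine ⟨ContinuousLinearMap.id ℝ E + a⁻¹ • T, (hasFDerivAt_id x).add (hT.const_smul a⁻¹),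
    opNorm_le_of_abs_inner_le (fun z z' ↦ ?_) (by positivity) fun z ↦ ?_⟩
  · have := hTsymm z z'
    simp_all [inner_add_left, inner_add_right, inner_smul_left, inner_smul_right]
  · have hlow := neg_le_secondDeriv_of_isLocalMin_withParaboloid hw.contDiffAt hmin
    have hup := hw.secondDeriv_le a ha.le hlow z
    have hquad : inner ℝ ((ContinuousLinearMap.id ℝ E + a⁻¹ • T) z) z =
        a⁻¹ * (a * ‖z‖ ^ 2 + secondDeriv w x z) := by
      simp only [add_apply, ContinuousLinearMap.id_apply, smul_apply, inner_add_left,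
        real_inner_self_eq_norm_sq, inner_smul_left, Real.ringHom_apply, hTw]
      field_simp
    rw [hquad, abs_of_nonneg (mul_nonneg (by positivity) (by linarith [hlow z])),
      inv_mul_le_iff₀ ha]
    linarith

end TouchingParaboloids

section VertexMeasure

theorem abs_det_le_norm_pow {E : Type*} [NormedAddCommGroup E] [NormedSpace ℝ E]
    [FiniteDimensional ℝ E] (T : E →L[ℝ] E) : |T.det| ≤ ‖T‖ ^ Module.finrank ℝ E := by
  borelize E
  let μ : Measure E := Measure.addHaar
  have himage : T '' closedBall 0 1 ⊆ closedBall 0 ‖T‖ := by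
    rintro _ ⟨z, hz, rfl⟩
    rw [mem_closedBall_zero_iff] at hz ⊢
    exact T.le_of_opNorm_le_of_le le_rfl hz |>.trans_eq (mul_one _)
  have hmeasure := measure_mono (μ := μ) himage
  rw [Measure.addHaar_image_continuousLinearMap, Measure.addHaar_closedBall' _ _ (norm_nonneg T),
    ENNReal.mul_le_mul_iff_left (measure_closedBall_pos _ _ one_pos).ne'
      measure_closedBall_lt_top.ne] at hmeasure
  exact (ENNReal.ofReal_le_ofReal_iff (by positivity)).1 hmeasure

variable {E : Type*} [NormedAddCommGroup E] [InnerProductSpace ℝ E] [FiniteDimensional ℝ E]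
  [MeasurableSpace E] [BorelSpace E]

/-- The contact points determine the vertices through `y = x + a⁻¹ ∇w(x)`, so that this is the area
formula combined with the bound on `D²w` at contact points. -/
theorem measure_vertices_le (μ : Measure E) [μ.IsAddHaarMeasure] {w : E → ℝ} {a L : ℝ}
    (ha : 0 < a) (hL : 0 ≤ L) {S V : Set E} (hS : MeasurableSet S)
    (hw : ∀ x ∈ S, IsSupersolutionAt L w x)
    (hcontact : ∀ x ∈ S, ∃ y, IsLocalMin (withParaboloid w a y) x)
    (hV : ∀ y ∈ V, ∃ x ∈ S, IsLocalMin (withParaboloid w a y) x) :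
    μ V ≤ ENNReal.ofReal ((1 + L) ^ Module.finrank ℝ E) * μ S := by
  have hderiv : ∀ x ∈ S, ∃ T : E →L[ℝ] E,
      HasFDerivAt (fun z ↦ z + a⁻¹ • gradient w z) T x ∧ ‖T‖ ≤ 1 + L := fun x hx ↦
    let ⟨_, hmin⟩ := hcontact x hx
    exists_hasFDerivAt_vertexMap ha hL (hw x hx) hmin
  choose! T hT hnorm using hderiv
  have himage : V ⊆ (fun z ↦ z + a⁻¹ • gradient w z) '' S := fun y hy ↦ by
    obtain ⟨x, hx, hmin⟩ := hV y hy
    refine ⟨x, hx, ?_⟩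
    simp [gradient_eq_of_isLocalMin_withParaboloid
      ((hw x hx).contDiffAt.differentiableAt two_ne_zero) hmin, smul_smul, ha.ne']
  calc μ V ≤ ∫⁻ x in S, ENNReal.ofReal |(T x).det| ∂μ :=
        (measure_mono himage).trans <| addHaar_image_le_lintegral_abs_det_fderiv μ hS
          fun x hx ↦ (hT x hx).hasFDerivWithinAt
    _ ≤ ∫⁻ _ in S, ENNReal.ofReal ((1 + L) ^ Module.finrank ℝ E) ∂μ :=
        setLIntegral_mono' hS fun x hx ↦ ENNReal.ofReal_le_ofReal <|
          (abs_det_le_norm_pow (T x)).trans (by gcongr; exact hnorm x hx)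
    _ = _ := by simp

end VertexMeasure

section ContactSet

variable {E : Type*} [NormedAddCommGroup E] {w : E → ℝ} {U K : Set E} {a b : ℝ} {x y : E}

/-- The points at which `w` is touched from below, within `U`, by a paraboloid of opening `a` with
vertex in the closure of `U`. -/
def contactSet (w : E → ℝ) (U : Set E) (a : ℝ) : Set E :=
  {x | ∃ y ∈ closure U, IsMinOn (withParaboloid w a y) U x}

theorem isCompact_inter_contactSet (hU : IsCompact (closure U)) (hK : IsCompact K)
    (hw : ContinuousOn w K) : IsCompact (K ∩ contactSet w U a) := by
  have hC : IsCompact (K ×ˢ closure U) := hK.prod hU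
  have hclosed : IsClosed (K ×ˢ closure U ∩ ⋂ z ∈ U, {q ∈ K ×ˢ closure U |
      withParaboloid w a q.2 q.1 ≤ withParaboloid w a q.2 z}) := by
    refine hC.isClosed.inter (isClosed_biInter fun z _ ↦ hC.isClosed.isClosed_le ?_ ?_)
    · exact (hw.comp continuousOn_fst fun q hq ↦ hq.1).add (by fun_prop)
    · unfold withParaboloid
      fun_prop
  convert (hC.of_isClosed_subset hclosed inter_subset_left).image continuous_fst
  ext x
  simp only [contactSet, isMinOn_iff, mem_inter_iff, mem_ofPred_eq, mem_image, mem_prod, mem_iInter,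
    Prod.exists]
  grind

theorem le_add_of_mem_contactSet_ball {R : ℝ} {p z : E} (ha : 0 ≤ a)
    (hz : z ∈ contactSet w (ball p R) a) (hx : x ∈ ball p R) : w z ≤ w x + 2 * a * R ^ 2 := by
  obtain ⟨y, hy, hmin⟩ := hz
  have hxy : ‖x - y‖ ≤ 2 * R := by
    rw [← dist_eq_norm]
    linarith [dist_triangle_right x y p, mem_ball.1 hx,
      mem_closedBall.1 (closure_ball_subset_closedBall hy)]
  calc w z ≤ withParaboloid w a y z := le_add_of_nonneg_right (by positivity)
    _ ≤ withParaboloid w a y x := hmin hx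
    _ ≤ w x + a / 2 * (2 * R) ^ 2 := by unfold withParaboloid; gcongr
    _ = w x + 2 * a * R ^ 2 := by ring

theorem exists_isMinOn_withParaboloid_of_le_add [ProperSpace E] {m s : ℝ}
    (hw : ContinuousOn w (closedBall y (2 * s))) (hb : 0 ≤ b) (hx : dist x y ≤ s)
    (hmin : ∀ z ∈ U, w x ≤ w z + m) (hm : 2 * m ≤ 3 * b * s ^ 2) :
    ∃ x' ∈ closedBall y (2 * s), IsMinOn (withParaboloid w b y) U x' := by
  have hs : 0 ≤ s := dist_nonneg.trans hx
  have hx' : x ∈ closedBall y (2 * s) := mem_closedBall.2 (by linarith)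
  obtain ⟨x', hx'ball, hx'min⟩ := (isCompact_closedBall y (2 * s)).exists_isMinOn ⟨x, hx'⟩
    (f := withParaboloid w b y) (hw.add (by fun_prop))
  refine ⟨x', hx'ball, isMinOn_iff.2 fun z hz ↦ ?_⟩
  by_cases hzball : z ∈ closedBall y (2 * s)
  · exact hx'min hzball
  · rw [mem_closedBall, dist_eq_norm, not_le] at hzball
    rw [dist_eq_norm] at hx
    calc withParaboloid w b y x' ≤ w x + b / 2 * ‖x - y‖ ^ 2 := hx'min hx'
      _ ≤ (w z + m) + b / 2 * s ^ 2 := by gcongr; exact hmin z hz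
      _ ≤ w z + b / 2 * (2 * s) ^ 2 := by linarith
      _ ≤ withParaboloid w b y z := by unfold withParaboloid; gcongr

theorem inter_contactSet_subset [InnerProductSpace ℝ E] (hU : Convex ℝ U) (hK : K ⊆ closure U)
    (ha : 0 < a) (hab : a ≤ b) : K ∩ contactSet w U a ⊆ K ∩ contactSet w U b := by
  rintro x ⟨hxK, y, hy, hmin⟩
  have hb : a + (b - a) = b := by ring
  refine ⟨hxK, AffineMap.lineMap y x ((b - a) / b), ?_, ?_⟩
  · exact hU.closure.lineMap_mem hy (hK hxK)
      ⟨div_nonneg (by linarith) (by linarith), div_le_one_of_le₀ (by linarith) (by linarith)⟩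
  · have := (isMinOn_withParaboloid_withParaboloid (w := w) (y₁ := y) (y₂ := x) (U := U) (x := x)
      (hb.trans_ne (by linarith))).1 <| isMinOn_iff.2 fun z hz ↦ by
        calc withParaboloid (withParaboloid w a y) (b - a) x x = withParaboloid w a y x := by
              simp [withParaboloid]
          _ ≤ withParaboloid w a y z := hmin hz
          _ ≤ withParaboloid (withParaboloid w a y) (b - a) x z :=
            le_add_of_nonneg_right (mul_nonneg (by linarith) (sq_nonneg _))
    rwa [hb] at this

end ContactSet

section RadialBarrier

variable {E : Type*} [NormedAddCommGroup E] {w : E → ℝ} {L a k : ℝ} {x x₀ y : E}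

/-- The function `‖z - x₀‖ ^ (-2 (1 + L))`. The exponent is large enough for it to be a strict
subsolution away from `x₀`, for the class of operators of `IsSupersolutionAt L`. -/
def radialBarrier (L : ℝ) (x₀ z : E) : ℝ := (‖z - x₀‖ ^ 2) ^ (-(1 + L))

theorem radialBarrier_pos (hx : x ≠ x₀) : 0 < radialBarrier L x₀ x := by
  have := norm_sub_pos_iff.2 hx
  unfold radialBarrier
  positivity

theorem radialBarrier_lt_radialBarrier (hL : 0 ≤ L) (hx : x ≠ x₀) (hxy : ‖x - x₀‖ < ‖y - x₀‖) :
    radialBarrier L x₀ y < radialBarrier L x₀ x := by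
  have hx0 := norm_sub_pos_iff.2 hx
  refine Real.rpow_lt_rpow_of_neg (by positivity) ?_ (by linarith)
  gcongr

variable [InnerProductSpace ℝ E]

theorem contDiffAt_radialBarrier (L : ℝ) (hx : x ≠ x₀) :
    ContDiffAt ℝ 2 (radialBarrier L x₀) x :=
  (Real.contDiffAt_rpow_const_of_ne (by simpa [sub_eq_zero])).comp x
    (contDiff_norm_sub_sq x₀).contDiffAt

theorem secondDeriv_radialBarrier (L : ℝ) (hx : x ≠ x₀) (z : E) :
    secondDeriv (radialBarrier L x₀) x z =
      4 * (1 + L) * (2 + L) * (‖x - x₀‖ ^ 2) ^ (-(3 + L)) * inner ℝ (x - x₀) z ^ 2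
        - 2 * (1 + L) * (‖x - x₀‖ ^ 2) ^ (-(2 + L)) * ‖z‖ ^ 2 := by
  have hderiv₂ : deriv (fun t : ℝ ↦ -(1 + L) * t ^ (-(1 + L) - 1)) =
      fun t ↦ -(1 + L) * ((-(1 + L) - 1) * t ^ (-(1 + L) - 1 - 1)) := by
    funext t
    rw [deriv_const_mul_field, Real.deriv_rpow_const']
  unfold radialBarrier
  rw [secondDeriv_comp (φ := fun t ↦ t ^ (-(1 + L)))
    (Real.contDiffAt_rpow_const_of_ne (by simpa [sub_eq_zero]))
    (contDiff_norm_sub_sq x₀).contDiffAt, Real.deriv_rpow_const', hderiv₂, fderiv_norm_sub_sq,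
    secondDeriv_norm_sub_sq, show -(1 + L) - 1 - 1 = -(3 + L) by ring,
    show -(1 + L) - 1 = -(2 + L) by ring]
  simp only [map_sub, smul_apply, sub_apply, coe_innerSL_apply, smul_eq_mul, inner_sub_left]
  ring

theorem not_isLocalMin_withParaboloid_sub_radialBarrier (hL : 0 ≤ L) (ha : 0 < a)
    (hw : IsSupersolutionAt L w x) (hx : x ≠ x₀) (hk : a ≤ k * (‖x - x₀‖ ^ 2) ^ (-(2 + L))) :
    ¬IsLocalMin (fun z ↦ withParaboloid w a y z - k * radialBarrier L x₀ z) x := by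
  intro hmin
  set Q := ‖x - x₀‖ ^ 2 with hQdef
  have hQ : 0 < Q := by have := norm_sub_pos_iff.2 hx; positivity
  set β := k * Q ^ (-(2 + L)) with hβdef
  have hβ : 0 < β := ha.trans_le hk
  have hβQ : k * Q ^ (-(3 + L)) = β / Q := by
    rw [hβdef, mul_div_assoc, ← Real.rpow_sub_one hQ.ne']
    ring_nf
  have hlow (z : E) : 4 * (1 + L) * (2 + L) * (β / Q) * inner ℝ (x - x₀) z ^ 2
      - (2 * (1 + L) * β + a) * ‖z‖ ^ 2 ≤ secondDeriv w x z := by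
    have hparab := contDiffAt_withParaboloid hw.contDiffAt a y
    have hbarrier := contDiffAt_radialBarrier L hx
    have := secondDeriv_nonneg_of_isLocalMin
      (hparab.sub (contDiffAt_const.mul hbarrier)) hmin z
    rw [secondDeriv_sub hparab (contDiffAt_const.mul hbarrier), secondDeriv_const_mul hbarrier,
      secondDeriv_radialBarrier L hx, secondDeriv_withParaboloid hw.contDiffAt, ← hQdef] at this
    rw [← hβQ]
    linarith
  have hup := hw.secondDeriv_le (2 * (1 + L) * β + a) (by positivity) (fun z ↦ by
    refine le_trans ?_ (hlow z)
    have : 0 ≤ 4 * (1 + L) * (2 + L) * (β / Q) * inner ℝ (x - x₀) z ^ 2 := by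
      have := ha.trans_le hk
      positivity
    linarith) (x - x₀)
  have hradial := (hlow (x - x₀)).trans hup
  rw [real_inner_self_eq_norm_sq, ← hQdef] at hradial
  have hcancel : 4 * (1 + L) * (2 + L) * (β / Q) * Q ^ 2 = 4 * (1 + L) * (2 + L) * β * Q := by
    field_simp
  have hle : 4 * (2 + L) * β ≤ 2 * (1 + L) * β + a :=
    le_of_mul_le_mul_right (a := (1 + L) * Q) (by linarith) (by positivity)
  nlinarith

theorem exists_isLocalMin_sub_radialBarrier [FiniteDimensional ℝ E] {v : E → ℝ} {R s : ℝ}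
    {x₁ : E} (hL : 0 ≤ L) (hs : 0 < s) (hk : 0 < k)
    (hv : ContinuousOn v (closedBall x₀ R \ ball x₀ s))
    (hx₁ : x₁ ∈ ball x₀ R \ closedBall x₀ s) (hmin : ∀ z ∈ closedBall x₀ R, v x₁ ≤ v z)
    (hinner : ∀ z ∈ closedBall x₀ s, v x₁ + k * (s ^ 2) ^ (-(1 + L)) < v z) :
    ∃ x ∈ ball x₀ R \ closedBall x₀ s,
      IsLocalMin (fun z ↦ v z - k * radialBarrier L x₀ z) x := by
  have hne {x : E} (hx : x ∉ ball x₀ s) : x ≠ x₀ := by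
    rintro rfl
    exact hx (mem_ball_self hs)
  have hx₁ne : x₁ ≠ x₀ := hne fun h ↦ hx₁.2 (ball_subset_closedBall h)
  have hsub : ball x₀ R \ closedBall x₀ s ⊆ closedBall x₀ R \ ball x₀ s :=
    sdiff_subset_sdiff ball_subset_closedBall ball_subset_closedBall
  refine ((isCompact_closedBall x₀ R).diff isOpen_ball).exists_isLocalMin_mem_open hsub
    (hv.sub fun z hz ↦ ((contDiffAt_radialBarrier L (hne hz.2)).continuousAt.const_mul
      k).continuousWithinAt) (hsub hx₁) ?_ (isOpen_ball.sdiff isClosed_closedBall)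
  rintro z ⟨⟨hzR, hzs⟩, hz⟩
  by_cases hzinner : z ∈ closedBall x₀ s
  · have hzs : ‖z - x₀‖ = s := by
      rw [← dist_eq_norm]
      exact le_antisymm hzinner (not_lt.1 hzs)
    have hkz : k * radialBarrier L x₀ z = k * (s ^ 2) ^ (-(1 + L)) := by rw [radialBarrier, hzs]
    have := mul_pos hk (radialBarrier_pos (L := L) hx₁ne)
    linarith [hinner z hzinner]
  · have hzouter : R ≤ dist z x₀ := by simpa [hzinner] using hz
    have hlt : ‖x₁ - x₀‖ < ‖z - x₀‖ := by
      rw [← dist_eq_norm, ← dist_eq_norm]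
      exact (mem_ball.1 hx₁.1).trans_le hzouter
    have := mul_lt_mul_of_pos_left (radialBarrier_lt_radialBarrier hL hx₁ne hlt) hk
    linarith [hmin z hzR]

end RadialBarrier

section Propagation

variable {E : Type*} [NormedAddCommGroup E] [InnerProductSpace ℝ E] [FiniteDimensional ℝ E]
  {w : E → ℝ} {U : Set E} {L a r : ℝ} {x₀ x₁ y : E}

theorem exists_withParaboloid_le_add (hL : 0 ≤ L) (ha : 0 < a) (hr : 0 < r)
    (hw : ∀ x ∈ closedBall x₀ (7 * r), IsSupersolutionAt L w x) (hx₁ : dist x₁ x₀ ≤ 6 * r)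
    (hmin : IsMinOn (withParaboloid w a y) (closedBall x₀ (7 * r)) x₁) :
    ∃ x ∈ closedBall x₀ (r / 4),
      withParaboloid w a y x ≤ withParaboloid w a y x₁ + 49 * 784 ^ (1 + L) * a * r ^ 2 := by
  by_contra! hcon
  have hheight : a * (49 * r ^ 2) ^ (2 + L) * ((r / 4) ^ 2) ^ (-(1 + L)) =
      49 * 784 ^ (1 + L) * a * r ^ 2 := by
    rw [show 2 + L = 1 + (1 + L) by ring, Real.rpow_add (by positivity), Real.rpow_one,
      Real.rpow_neg (by positivity), show 49 * r ^ 2 = 784 * (r / 4) ^ 2 by ring,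
      Real.mul_rpow (by norm_num) (by positivity)]
    field_simp
    ring
  have hx₁inner : x₁ ∉ closedBall x₀ (r / 4) := fun h ↦ by
    have : 0 < 49 * 784 ^ (1 + L) * a * r ^ 2 := by positivity
    linarith [hcon x₁ h]
  obtain ⟨x, ⟨hxball, hxinner⟩, hxmin⟩ := exists_isLocalMin_sub_radialBarrier
    (k := a * (49 * r ^ 2) ^ (2 + L)) hL (by positivity : 0 < r / 4) (by positivity)
    (fun z hz ↦
      (contDiffAt_withParaboloid (hw z hz.1).contDiffAt a y).continuousAt.continuousWithinAt)
    ⟨mem_ball.2 (by linarith), hx₁inner⟩ hmin (by simpa only [hheight] using hcon)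
  have hxne : x ≠ x₀ := by
    rintro rfl
    exact hxinner (mem_closedBall_self (by positivity))
  have hxpos := norm_sub_pos_iff.2 hxne
  refine not_isLocalMin_withParaboloid_sub_radialBarrier hL ha
    (hw x (ball_subset_closedBall hxball)) hxne ?_ hxmin
  rw [Real.rpow_neg (by positivity), ← div_eq_mul_inv, le_div_iff₀ (by positivity)]
  gcongr
  rw [mem_ball, dist_eq_norm] at hxball
  nlinarith

/-- The factor by which the opening of the touching paraboloids has to be increased for the contact
set to spread from a point to a fixed proportion of a ball nearby. The coefficient
`49 * 784 ^ (1 + L)` is the loss in `exists_withParaboloid_le_add`. -/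
def openingGrowth (L : ℝ) : ℝ := 1 + 64 * (49 * 784 ^ (1 + L))

theorem two_le_openingGrowth (hL : 0 ≤ L) : 2 ≤ openingGrowth L := by
  have := Real.one_le_rpow (show (1 : ℝ) ≤ 784 by norm_num) (show 0 ≤ 1 + L by linarith)
  rw [openingGrowth]
  linarith

/-- Proportion of a ball covered by the contact set once the opening has been increased by
`openingGrowth L`. -/
def contactDensity (n : ℕ) (L : ℝ) : ℝ := ((16 * (1 + L))⁻¹) ^ n

theorem exists_vertices_contact (hU : Convex ℝ U) (hL : 0 ≤ L) (ha : 0 < a) (hr : 0 < r)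
    (hw : ∀ x ∈ U, IsSupersolutionAt L w x) (hball : closedBall x₀ (7 * r) ⊆ U)
    (hx₁ : dist x₁ x₀ ≤ 6 * r) (hcontact : x₁ ∈ contactSet w U a) :
    ∃ y₁ x₂ : E, ∃ t : ℝ, 1 / 2 ≤ t ∧ ∀ y ∈ AffineMap.homothety y₁ t '' closedBall x₂ (r / 8),
      y ∈ closure U ∧ ∃ x ∈ closedBall x₀ r,
        IsMinOn (withParaboloid w (openingGrowth L * a) y) U x := by
  obtain ⟨y₁, hy₁, hmin⟩ := hcontact
  obtain ⟨x₂, hx₂, hle⟩ := exists_withParaboloid_le_add hL ha hr (fun x hx ↦ hw x (hball hx)) hx₁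
    (hmin.on_subset hball)
  set b := 64 * (49 * 784 ^ (1 + L)) * a with hb
  have hab : a + b = openingGrowth L * a := by rw [openingGrowth, hb]; ring
  have hbpos : 0 < b := by positivity
  have hbge : a ≤ b := by
    have := mul_le_mul_of_nonneg_right (two_le_openingGrowth hL) ha.le
    linarith
  refine ⟨y₁, x₂, b / (a + b), by rw [div_le_div_iff₀ two_pos (by positivity)]; linarith, ?_⟩
  rintro _ ⟨y, hy, rfl⟩
  rw [mem_closedBall] at hy hx₂
  have hyball : closedBall y (2 * (r / 8)) ⊆ closedBall x₀ r :=
    closedBall_subset_closedBall' (by linarith [dist_triangle y x₂ x₀])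
  have hyU : closedBall y (2 * (r / 8)) ⊆ U :=
    hyball.trans ((closedBall_subset_closedBall (by linarith)).trans hball)
  rw [AffineMap.homothety_eq_lineMap]
  refine ⟨hU.closure.lineMap_mem hy₁
    (subset_closure (hyU (mem_closedBall_self (by positivity))))
    ⟨by positivity, div_le_one_of_le₀ (by linarith) (by positivity)⟩, ?_⟩
  obtain ⟨x, hx, hxmin⟩ := exists_isMinOn_withParaboloid_of_le_add (U := U) (y := y)
    (w := withParaboloid w a y₁) (fun z hz ↦ (contDiffAt_withParaboloid (hw z
      (hyU hz)).contDiffAt a y₁).continuousAt.continuousWithinAt) hbpos.le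
    (by rwa [dist_comm]) (fun z hz ↦ hle.trans (add_le_add_left (hmin hz) _))
    (by rw [hb]; nlinarith [show 0 ≤ 49 * 784 ^ (1 + L) * a * r ^ 2 by positivity])
  exact ⟨x, hyball hx, hab ▸ (isMinOn_withParaboloid_withParaboloid (by positivity)).1 hxmin⟩

theorem contactDensity_mul_measure_le [MeasurableSpace E] [BorelSpace E] (μ : Measure E)
    [μ.IsAddHaarMeasure] (hU : Convex ℝ U) (hUcompact : IsCompact (closure U)) (hL : 0 ≤ L)
    (ha : 0 < a) (hr : 0 < r) (hw : ∀ x ∈ U, IsSupersolutionAt L w x)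
    (hball : closedBall x₀ (7 * r) ⊆ U) (hx₁ : dist x₁ x₀ ≤ 6 * r)
    (hcontact : x₁ ∈ contactSet w U a) :
    ENNReal.ofReal (contactDensity (Module.finrank ℝ E) L) * μ (closedBall x₀ r) ≤
      μ (closedBall x₀ r ∩ contactSet w U (openingGrowth L * a)) := by
  obtain ⟨y₁, x₂, t, ht, hV⟩ := exists_vertices_contact hU hL ha hr hw hball hx₁ hcontact
  have hsub : closedBall x₀ r ⊆ U := (closedBall_subset_closedBall (by linarith)).trans hball
  have hnhds {x : E} (hx : x ∈ closedBall x₀ r) : U ∈ 𝓝 x :=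
    mem_of_superset (isOpen_ball.mem_nhds (closedBall_subset_ball (by linarith) hx))
      (ball_subset_closedBall.trans hball)
  have hmeas : MeasurableSet (closedBall x₀ r ∩ contactSet w U (openingGrowth L * a)) :=
    (isCompact_inter_contactSet hUcompact (isCompact_closedBall x₀ r) fun x hx ↦
      (hw x (hsub hx)).contDiffAt.continuousAt.continuousWithinAt).isClosed.measurableSet
  have hvertices := measure_vertices_le μ
    (mul_pos (two_pos.trans_le (two_le_openingGrowth hL)) ha) hL hmeas
    (fun x hx ↦ hw x (hsub hx.1)) (fun x ⟨hx, y, _, hmin⟩ ↦ ⟨y, hmin.isLocalMin (hnhds hx)⟩)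
    fun y hy ↦
      let ⟨hyU, x, hx, hmin⟩ := hV y hy
      ⟨x, ⟨hx, y, hyU, hmin⟩, hmin.isLocalMin (hnhds hx)⟩
  set n := Module.finrank ℝ E
  have himage : ENNReal.ofReal ((16⁻¹ : ℝ) ^ n) * μ (closedBall x₀ r) ≤
      μ (AffineMap.homothety y₁ t '' closedBall x₂ (r / 8)) := by
    rw [Measure.addHaar_image_homothety, div_eq_inv_mul,
      Measure.addHaar_closedBall_mul _ _ (by norm_num) hr.le,
      Measure.addHaar_closedBall_center μ x₀, ← mul_assoc, ← ENNReal.ofReal_mul (by positivity),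
      abs_of_nonneg (by positivity), ← mul_pow]
    gcongr
    linarith
  have hL' : ENNReal.ofReal ((1 + L) ^ n) ≠ 0 := by simpa using by positivity
  refine (ENNReal.mul_le_mul_iff_right hL' ENNReal.ofReal_ne_top).1 (le_trans ?_ hvertices)
  refine le_of_eq_of_le ?_ himage
  rw [← mul_assoc, ← ENNReal.ofReal_mul (by positivity), contactDensity, ← mul_pow]
  congr
  field_simp

end Propagation

section Covering

variable {E : Type*} [NormedAddCommGroup E] [NormedSpace ℝ E]

theorem mul_measure_le_of_forall_closedBall [FiniteDimensional ℝ E] [MeasurableSpace E]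
    [BorelSpace E] (μ : Measure E) [μ.IsAddHaarMeasure] {U T : Set E} {c : E → E} {r : E → ℝ}
    {R : ℝ} {κ : ℝ≥0∞} (hT : MeasurableSet T) (hr : ∀ x ∈ U, 0 < r x) (hR : ∀ x ∈ U, r x ≤ R)
    (hU : ∀ x ∈ U, closedBall (c x) (r x) ⊆ U) (hc : ∀ x ∈ U, dist x (c x) ≤ 2 * r x)
    (hκ : ∀ x ∈ U, κ * μ (closedBall (c x) (r x)) ≤ μ (closedBall (c x) (r x) ∩ T)) :
    κ * μ U ≤ 7 ^ Module.finrank ℝ E * μ (U ∩ T) := by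
  obtain ⟨u, huU, hdisj, hcover⟩ := Vitali.exists_disjoint_subfamily_covering_enlargement
    (fun x ↦ closedBall (c x) (r x)) U r 2 (by norm_num) (fun x hx ↦ (hr x hx).le) R hR
    fun x hx ↦ nonempty_closedBall.2 (hr x hx).le
  have hcountable : u.Countable := hdisj.countable_of_nonempty_interior fun x hx ↦
    (nonempty_ball.2 (hr x (huU hx))).mono ball_subset_interior_closedBall
  have hUsub : U ⊆ ⋃ x ∈ u, closedBall (c x) (7 * r x) := fun x hx ↦ by
    obtain ⟨x', hx', ⟨q, hq, hq'⟩, hle⟩ := hcover x hx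
    rw [mem_closedBall] at hq hq'
    refine mem_biUnion hx' (mem_closedBall.2 ?_)
    linarith [hc x hx, dist_triangle x (c x) (c x'), dist_triangle_left (c x) (c x') q]
  have hvolume (x) (hx : x ∈ u) : μ (closedBall (c x) (7 * r x)) =
      7 ^ Module.finrank ℝ E * μ (closedBall (c x) (r x)) := by
    rw [Measure.addHaar_closedBall_mul _ _ (by norm_num) (hr x (huU hx)).le,
      ← Measure.addHaar_closedBall_center μ (c x), ENNReal.ofReal_pow (by norm_num)]
    simp
  calc κ * μ U ≤ κ * ∑' x : u, μ (closedBall (c x) (7 * r x)) := by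
        gcongr
        exact (measure_mono hUsub).trans (measure_biUnion_le _ hcountable _)
    _ = 7 ^ Module.finrank ℝ E * ∑' x : u, κ * μ (closedBall (c x) (r x)) := by
        rw [tsum_congr fun x : u ↦ hvolume x x.2, ENNReal.tsum_mul_left, ENNReal.tsum_mul_left,
          mul_left_comm]
    _ ≤ 7 ^ Module.finrank ℝ E * ∑' x : u, μ (closedBall (c x) (r x) ∩ T) := by
        gcongr with x
        exact hκ x (huU x.2)
    _ = 7 ^ Module.finrank ℝ E * μ (⋃ x ∈ u, closedBall (c x) (r x) ∩ T) := by
        rw [measure_biUnion hcountable (hdisj.mono fun _ ↦ inter_subset_left)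
          fun _ _ ↦ measurableSet_closedBall.inter hT]
    _ ≤ 7 ^ Module.finrank ℝ E * μ (U ∩ T) := by
        gcongr
        exact iUnion₂_subset fun x hx ↦ inter_subset_inter_left T (hU x (huU hx))

theorem exists_closedBall_subset_ball_diff {A : Set E} {p x : E} {ρ : ℝ} (hA : IsClosed A)
    (hne : A.Nonempty) (hAρ : A ⊆ closedBall p ρ) (hx : x ∈ ball p ρ \ A) :
    0 < infDist x A ∧ infDist x A ≤ 2 * ρ ∧
      ∃ c, closedBall c (infDist x A / 4) ⊆ ball p ρ \ A ∧ dist x c ≤ infDist x A / 2 := by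
  obtain ⟨hxball, hxA⟩ := hx
  rw [mem_ball] at hxball
  have hρ : 0 < ρ := dist_nonneg.trans_lt hxball
  have hpos : 0 < infDist x A := (hA.notMem_iff_infDist_pos hne).1 hxA
  have hle : infDist x A ≤ 2 * ρ := by
    obtain ⟨q, hq⟩ := hne
    linarith [infDist_le_dist_of_mem (x := x) hq, dist_triangle_right x q p,
      mem_closedBall.1 (hAρ hq)]
  set d := infDist x A
  set t := d / (2 * ρ) with ht
  have ht0 : 0 ≤ t := by positivity
  have ht1 : t ≤ 1 := div_le_one_of_le₀ hle (by positivity)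
  have htρ : t * ρ = d / 2 := by rw [ht]; field_simp
  -- the centre is `x` moved towards `p`, so that the small ball stays inside `ball p ρ`
  have hxc : dist x (AffineMap.lineMap x p t) ≤ d / 2 := by
    rw [dist_left_lineMap, Real.norm_of_nonneg ht0, ← htρ]
    gcongr
  have hcp : dist (AffineMap.lineMap x p t) p ≤ ρ - d / 2 := by
    rw [dist_lineMap_right, Real.norm_of_nonneg (sub_nonneg.2 ht1), ← htρ]
    nlinarith
  refine ⟨hpos, hle, AffineMap.lineMap x p t, fun z hz ↦ ⟨?_, fun hzA ↦ ?_⟩, hxc⟩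
  · exact closedBall_subset_ball' (by linarith) hz
  · rw [mem_closedBall, dist_comm] at hz
    linarith [infDist_le_dist_of_mem (x := x) hzA, dist_triangle x (AffineMap.lineMap x p t) z]

/-- The growing ink spots form of the Krylov–Safonov covering lemma. -/
theorem measureReal_ball_diff_le [FiniteDimensional ℝ E] [MeasurableSpace E] [BorelSpace E]
    (μ : Measure E) [μ.IsAddHaarMeasure] {A A' : Set E} {p : E} {ρ κ : ℝ} (hκ : 0 ≤ κ)
    (hA : IsClosed A) (hA' : MeasurableSet A') (hne : A.Nonempty) (hAρ : A ⊆ closedBall p ρ)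
    (hAA' : A ⊆ A')
    (hgrowth : ∀ c r, 0 < r → r ≤ ρ / 2 → closedBall c r ⊆ ball p ρ →
      (∃ x ∈ A, dist x c ≤ 6 * r) →
        ENNReal.ofReal κ * μ (closedBall c r) ≤ μ (closedBall c r ∩ A')) :
    μ.real (ball p ρ \ A') ≤
      (1 - κ / 7 ^ Module.finrank ℝ E) * μ.real (ball p ρ \ A) := by
  have hcentre : ∀ x ∈ ball p ρ \ A, ∃ c,
      closedBall c (infDist x A / 4) ⊆ ball p ρ \ A ∧ dist x c ≤ infDist x A / 2 :=
    fun x hx ↦ (exists_closedBall_subset_ball_diff hA hne hAρ hx).2.2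
  choose! c hcsub hcdist using hcentre
  have hdensity := mul_measure_le_of_forall_closedBall μ (R := ρ / 2) (κ := ENNReal.ofReal κ)
    (r := fun x ↦ infDist x A / 4) hA'
    (fun x hx ↦ by linarith [(exists_closedBall_subset_ball_diff hA hne hAρ hx).1])
    (fun x hx ↦ by linarith [(exists_closedBall_subset_ball_diff hA hne hAρ hx).2.1]) hcsub
    (fun x hx ↦ by linarith [hcdist x hx]) fun x hx ↦ by
      obtain ⟨hpos, hle, -⟩ := exists_closedBall_subset_ball_diff hA hne hAρ hx
      obtain ⟨q, hq, hxq⟩ := hA.exists_infDist_eq_dist hne x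
      exact hgrowth _ _ (by linarith) (by linarith) ((hcsub x hx).trans sdiff_subset)
        ⟨q, hq, by linarith [dist_triangle_left q (c x) x, hcdist x hx]⟩
  have hfin : μ (ball p ρ \ A) ≠ ∞ :=
    measure_ne_top_of_subset sdiff_subset measure_ball_lt_top.ne
  have hreal : κ * μ.real (ball p ρ \ A) ≤
      7 ^ Module.finrank ℝ E * μ.real ((ball p ρ \ A) ∩ A') := by
    have := ENNReal.toReal_mono (by finiteness) hdensity
    simpa [Measure.real, hκ] using this
  have hsplit := measureReal_inter_add_sdiff (μ := μ) (s := ball p ρ \ A) hA' hfin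
  rw [Set.sdiff_sdiff, union_eq_self_of_subset_left hAA'] at hsplit
  rw [sub_mul, div_mul_eq_mul_div, one_mul, le_sub_comm, div_le_iff₀' (by positivity)]
  exact hreal.trans_eq (by rw [← hsplit]; ring)

end Covering

section WeakHarnack

variable {E : Type*} [NormedAddCommGroup E] [InnerProductSpace ℝ E] [FiniteDimensional ℝ E]
  {w : E → ℝ} {L a η ρ : ℝ} {p x : E}

theorem inter_contactSet_nonempty (hρ : 0 < ρ) (ha : 0 ≤ a)
    (hw : ContinuousOn w (ball p (5 * ρ))) (hnonneg : ∀ z ∈ ball p (5 * ρ), 0 ≤ w z)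
    (hx : x ∈ ball p (ρ / 2)) (hxa : 16 * w x ≤ a * ρ ^ 2) :
    (closedBall p ρ ∩ contactSet w (ball p (5 * ρ)) a).Nonempty := by
  have hsub : closedBall x (2 * (ρ / 4)) ⊆ closedBall p ρ := by
    refine closedBall_subset_closedBall' ?_
    rw [mem_ball] at hx
    linarith
  have hx5 : x ∈ ball p (5 * ρ) := ball_subset_ball (by linarith) hx
  obtain ⟨z, hz, hmin⟩ := exists_isMinOn_withParaboloid_of_le_add (y := x)
    (hw.mono (hsub.trans (closedBall_subset_ball (by linarith)))) ha
    (by rw [dist_self]; positivity) (fun z hz ↦ le_add_of_nonneg_left (hnonneg z hz))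
    (by nlinarith [hnonneg x hx5])
  exact ⟨z, hsub hz, x, subset_closure hx5, hmin⟩

theorem contactDensity_pos (n : ℕ) (hL : 0 ≤ L) : 0 < contactDensity n L := by
  unfold contactDensity
  positivity

theorem contactDensity_le_one (n : ℕ) (hL : 0 ≤ L) : contactDensity n L ≤ 1 :=
  pow_le_one₀ (by positivity) (inv_le_one_of_one_le₀ (by linarith))

variable [MeasurableSpace E] [BorelSpace E] (μ : Measure E) [μ.IsAddHaarMeasure]

theorem measureReal_ball_diff_contactSet_mul_le (hL : 0 ≤ L) (hρ : 0 < ρ) (ha : 0 < a)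
    (hw : ∀ x ∈ ball p (5 * ρ), IsSupersolutionAt L w x)
    (hne : (closedBall p ρ ∩ contactSet w (ball p (5 * ρ)) a).Nonempty) :
    μ.real (ball p ρ \
        (closedBall p ρ ∩ contactSet w (ball p (5 * ρ)) (openingGrowth L * a))) ≤
      (1 - contactDensity (Module.finrank ℝ E) L / 7 ^ Module.finrank ℝ E) *
        μ.real (ball p ρ \ (closedBall p ρ ∩ contactSet w (ball p (5 * ρ)) a)) := by
  have hsub : closedBall p ρ ⊆ ball p (5 * ρ) := closedBall_subset_ball (by linarith)
  have hclosed (b : ℝ) : IsClosed (closedBall p ρ ∩ contactSet w (ball p (5 * ρ)) b) :=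
    (isCompact_inter_contactSet isBounded_ball.isCompact_closure (isCompact_closedBall p ρ)
      fun x hx ↦ (hw x (hsub hx)).contDiffAt.continuousAt.continuousWithinAt).isClosed
  refine measureReal_ball_diff_le μ (contactDensity_pos _ hL).le (hclosed a)
    (hclosed _).measurableSet hne inter_subset_left
    (inter_contactSet_subset (convex_ball p _) (hsub.trans subset_closure) ha
      (le_mul_of_one_le_left ha.le (one_le_two.trans (two_le_openingGrowth hL)))) ?_
  rintro c r hr hrρ hcr ⟨x, ⟨-, hx⟩, hxc⟩
  have hball : closedBall c (7 * r) ⊆ ball p (5 * ρ) := by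
    have hcp := mem_ball.1 (hcr (mem_closedBall_self hr.le))
    exact closedBall_subset_ball' (by linarith)
  refine (contactDensity_mul_measure_le μ (convex_ball p _) isBounded_ball.isCompact_closure hL ha
    hr hw hball hxc hx).trans (measure_mono fun z ⟨hz, hz'⟩ ↦ ?_)
  exact ⟨hz, ball_subset_closedBall (hcr hz), hz'⟩

theorem measureReal_ball_diff_contactSet_pow_le (hL : 0 ≤ L) (hρ : 0 < ρ) (ha : 0 < a)
    (hw : ∀ x ∈ ball p (5 * ρ), IsSupersolutionAt L w x)
    (hne : (closedBall p ρ ∩ contactSet w (ball p (5 * ρ)) a).Nonempty) (k : ℕ) :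
    μ.real (ball p ρ \
        (closedBall p ρ ∩ contactSet w (ball p (5 * ρ)) (openingGrowth L ^ k * a))) ≤
      (1 - contactDensity (Module.finrank ℝ E) L / 7 ^ Module.finrank ℝ E) ^ k *
        μ.real (ball p ρ) := by
  have hgrowth := two_le_openingGrowth hL
  induction k with
  | zero => simpa using measureReal_mono sdiff_subset measure_ball_lt_top.ne
  | succ k ih =>
    have hnek : (closedBall p ρ ∩
        contactSet w (ball p (5 * ρ)) (openingGrowth L ^ k * a)).Nonempty :=
      hne.mono <| inter_contactSet_subset (convex_ball p _)
        ((closedBall_subset_ball (by linarith)).trans subset_closure) ha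
        (le_mul_of_one_le_left ha.le (one_le_pow₀ (by linarith)))
    have hdensity : contactDensity (Module.finrank ℝ E) L / 7 ^ Module.finrank ℝ E ≤ 1 :=
      div_le_one_of_le₀ ((contactDensity_le_one _ hL).trans (one_le_pow₀ (by norm_num)))
        (by positivity)
    rw [pow_succ', pow_succ', mul_assoc, mul_assoc]
    exact (measureReal_ball_diff_contactSet_mul_le μ hL hρ (by positivity) hw hnek).trans
      (mul_le_mul_of_nonneg_left ih (sub_nonneg.2 hdensity))

theorem weak_harnack (hL : 0 ≤ L) (hη : 0 < η) :
    ∃ δ > 0, ∀ (p : E) (ρ : ℝ), 0 < ρ → ∀ w : E → ℝ,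
      (∀ x ∈ ball p (5 * ρ), IsSupersolutionAt L w x) → (∀ x ∈ ball p (5 * ρ), 0 ≤ w x) →
      ∀ c₀, η * μ.real (ball p ρ) ≤ μ.real {x ∈ ball p ρ | c₀ ≤ w x} →
        ∀ x ∈ ball p (ρ / 2), δ * c₀ ≤ w x := by
  set q := 1 - contactDensity (Module.finrank ℝ E) L / 7 ^ Module.finrank ℝ E
  have hq : q < 1 := sub_lt_self _ (div_pos (contactDensity_pos _ hL) (by positivity))
  obtain ⟨k, hk⟩ := exists_pow_lt_of_lt_one hη hq
  have hgrowth := two_le_openingGrowth hL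
  set N := 1 + 800 * openingGrowth L ^ k with hN
  have hNpos : 0 < N := by positivity
  refine ⟨N⁻¹, inv_pos.2 hNpos, fun p ρ hρ w hw hnonneg c₀ hmeas x hx ↦ ?_⟩
  by_contra! hlt
  have hx5 : x ∈ ball p (5 * ρ) := ball_subset_ball (by linarith) hx
  set τ := N⁻¹ * c₀ with hτ
  have hτpos : 0 < τ := (hnonneg x hx5).trans_lt hlt
  have haρ : 16 * τ / ρ ^ 2 * ρ ^ 2 = 16 * τ := by field_simp
  have hdecay := measureReal_ball_diff_contactSet_pow_le μ hL hρ (by positivity) hw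
    (inter_contactSet_nonempty hρ (by positivity)
      (fun z hz ↦ (hw z hz).contDiffAt.continuousAt.continuousWithinAt) hnonneg hx
      (a := 16 * τ / ρ ^ 2) (by rw [haρ]; gcongr)) k
  have hsub : {z ∈ ball p ρ | c₀ ≤ w z} ⊆ ball p ρ \ (closedBall p ρ ∩
      contactSet w (ball p (5 * ρ)) (openingGrowth L ^ k * (16 * τ / ρ ^ 2))) := by
    refine fun z ⟨hz, hc₀⟩ ↦ ⟨hz, fun ⟨_, hcontact⟩ ↦ ?_⟩
    have hle := le_add_of_mem_contactSet_ball (by positivity) hcontact hx5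
    have hopening : 2 * (openingGrowth L ^ k * (16 * τ / ρ ^ 2)) * (5 * ρ) ^ 2 =
        800 * openingGrowth L ^ k * τ := by
      field_simp
      norm_num
    have hNτ : N * τ = c₀ := by rw [hτ, mul_inv_cancel_left₀ hNpos.ne']
    rw [hN] at hNτ
    linarith
  have hmono := measureReal_mono (μ := μ) hsub
    (measure_ne_top_of_subset sdiff_subset measure_ball_lt_top.ne)
  have hball : 0 < μ.real (ball p ρ) :=
    ENNReal.toReal_pos (measure_ball_pos μ p hρ).ne' measure_ball_lt_top.ne
  linarith [mul_lt_mul_of_pos_right hk hball]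

end WeakHarnack

section QuadForm

variable {n : ℕ} {M : Mat n}

/-- The quadratic form `z ↦ ⟪M z, z⟫` of a matrix `M`. -/
def quadForm (M : Mat n) (z : En n) : ℝ := inner ℝ (Matrix.toEuclideanCLM (𝕜 := ℝ) M z) z

theorem quadForm_add (M N : Mat n) (z : En n) :
    quadForm (M + N) z = quadForm M z + quadForm N z := by
  simp [quadForm, inner_add_left]

theorem quadForm_sub (M N : Mat n) (z : En n) :
    quadForm (M - N) z = quadForm M z - quadForm N z := by
  simp [quadForm, inner_sub_left]

theorem quadForm_smul (c : ℝ) (M : Mat n) (z : En n) : quadForm (c • M) z = c * quadForm M z := by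
  simp [quadForm, inner_smul_left]

theorem quadForm_one (z : En n) : quadForm 1 z = ‖z‖ ^ 2 := by simp [quadForm]

theorem quadForm_apply_smul (M : Mat n) (c : ℝ) (z : En n) :
    quadForm M (c • z) = c ^ 2 * quadForm M z := by
  simp only [quadForm, map_smul, inner_smul_right, inner_smul_left, Real.ringHom_apply]
  ring

theorem opNorm_nonneg (M : Mat n) : 0 ≤ opNorm M := norm_nonneg _

theorem opNorm_sub_le (M N : Mat n) : opNorm (M - N) ≤ opNorm M + opNorm N := by
  simpa only [opNorm, map_sub] using norm_sub_le _ _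

theorem opNorm_smul_one_le {t : ℝ} (ht : 0 ≤ t) : opNorm (t • (1 : Mat n)) ≤ t :=
  ContinuousLinearMap.opNorm_le_bound _ ht fun z ↦ by simp [norm_smul, abs_of_nonneg ht]

theorem abs_quadForm_le (M : Mat n) (z : En n) : |quadForm M z| ≤ opNorm M * ‖z‖ ^ 2 :=
  calc |quadForm M z| ≤ ‖Matrix.toEuclideanCLM (𝕜 := ℝ) M z‖ * ‖z‖ := abs_real_inner_le_norm _ _
    _ ≤ opNorm M * ‖z‖ * ‖z‖ := by gcongr; exact ContinuousLinearMap.le_opNorm _ z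
    _ = opNorm M * ‖z‖ ^ 2 := by ring

theorem isSymmetric_toEuclideanCLM (hM : M.IsSymm) :
    (Matrix.toEuclideanCLM (𝕜 := ℝ) M).IsSymmetric :=
  Matrix.isSymmetric_toEuclideanLin_iff.2 (by simpa [Matrix.IsHermitian] using hM.eq)

theorem opNorm_le_of_abs_quadForm_le (hM : M.IsSymm) {C : ℝ} (hC : 0 ≤ C)
    (h : ∀ z, |quadForm M z| ≤ C * ‖z‖ ^ 2) : opNorm M ≤ C :=
  opNorm_le_of_abs_inner_le (isSymmetric_toEuclideanCLM hM) hC h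

theorem posSemidef_of_quadForm_nonneg (hM : M.IsSymm) (h : ∀ z, 0 ≤ quadForm M z) :
    M.PosSemidef :=
  Matrix.isPositive_toEuclideanLin_iff.1 ⟨isSymmetric_toEuclideanCLM hM, h⟩

theorem quadForm_le_add_mul_norm_sub (M : Mat n) {z e : En n} (hz : ‖z‖ = 1) (he : ‖e‖ = 1) :
    quadForm M z ≤ quadForm M e + 2 * opNorm M * ‖z - e‖ := by
  let T := Matrix.toEuclideanCLM (𝕜 := ℝ) M
  have hsplit : quadForm M z - quadForm M e = inner ℝ (T (z - e)) z + inner ℝ (T e) (z - e) := by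
    simp only [quadForm, T, map_sub, inner_sub_left, inner_sub_right]
    ring
  have hleft : inner ℝ (T (z - e)) z ≤ opNorm M * ‖z - e‖ :=
    (real_inner_le_norm _ _).trans (by simpa [hz, opNorm, T] using T.le_opNorm (z - e))
  have hright : inner ℝ (T e) (z - e) ≤ opNorm M * ‖z - e‖ :=
    (real_inner_le_norm _ _).trans <| by
      gcongr
      simpa [he, opNorm, T] using T.le_opNorm e
  linarith

theorem quadForm_le_mul_norm_sq {C : ℝ} (h : ∀ z ∈ sphere (0 : En n) 1, quadForm M z ≤ C)
    (z : En n) : quadForm M z ≤ C * ‖z‖ ^ 2 := by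
  obtain rfl | hz := eq_or_ne z 0
  · simp [quadForm]
  · have hz' : 0 < ‖z‖ := norm_pos_iff.2 hz
    have := h (‖z‖⁻¹ • z) (by simp [norm_smul, hz'.ne'])
    rwa [quadForm_apply_smul, inv_pow, inv_mul_le_iff₀ (by positivity), mul_comm] at this

end QuadForm

section Hessian

variable {n : ℕ} {u : En n → ℝ} {x : En n}

theorem hessian_apply (hu : ContDiffAt ℝ 2 u x) (i j : Fin n) :
    hessian u x i j =
      fderiv ℝ (fderiv ℝ u) x (EuclideanSpace.single j 1) (EuclideanSpace.single i 1) := by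
  rw [hessian, Matrix.of_apply, pd2,
    fderiv_clm_apply (differentiableAt_fderiv hu) (differentiableAt_const _)]
  simp

theorem isSymm_hessian (hu : ContDiffAt ℝ 2 u x) : (hessian u x).IsSymm := by
  ext i j
  rw [Matrix.transpose_apply, hessian_apply hu, hessian_apply hu]
  exact hu.isSymmSndFDerivAt (by simp) _ _

theorem quadForm_hessian (hu : ContDiffAt ℝ 2 u x) (z : En n) :
    quadForm (hessian u x) z = secondDeriv u x z := by
  have hz : ∑ i, z i • EuclideanSpace.single i (1 : ℝ) = z := by
    simpa using (EuclideanSpace.basisFun (Fin n) ℝ).sum_repr z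
  calc quadForm (hessian u x) z = ∑ i, ∑ j, z i * (hessian u x i j * z j) := by
        rw [quadForm, real_inner_comm, Matrix.inner_toEuclideanCLM]
        simp [dotProduct, Matrix.mulVec, Finset.mul_sum]
    _ = ∑ i, ∑ j, z i * (fderiv ℝ (fderiv ℝ u) x (z j • EuclideanSpace.single j 1)
          (EuclideanSpace.single i 1)) := by
        simp [hessian_apply hu, mul_comm]
    _ = fderiv ℝ (fderiv ℝ u) x (∑ j, z j • EuclideanSpace.single j 1)
          (∑ i, z i • EuclideanSpace.single i 1) := by
        simp [map_sum, Finset.mul_sum]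
    _ = secondDeriv u x z := by rw [hz, secondDeriv]

theorem opNorm_hessian_sub_le_hessDiam {S : Set (En n)} (hS : hessDiam u S ≠ 0) {y : En n}
    (hx : x ∈ S) (hy : y ∈ S) : opNorm (hessian u x - hessian u y) ≤ hessDiam u S := by
  -- an unbounded set of distances would have `sSup` equal to `0`
  refine le_csSup (by_contra fun hbdd ↦ hS ?_) ⟨x, hx, y, hy, rfl⟩
  exact Real.sSup_of_not_bddAbove hbdd

theorem hessDiam_le {S : Set (En n)} {C : ℝ} (hC : 0 ≤ C)
    (h : ∀ x ∈ S, ∀ y ∈ S, opNorm (hessian u x - hessian u y) ≤ C) : hessDiam u S ≤ C :=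
  Real.sSup_le (by rintro _ ⟨x, hx, y, hy, rfl⟩; exact h x hx y hy) hC

end Hessian

section Ellipticity

variable {n : ℕ} {lam Lam : ℝ} {F : Mat n → ℝ} {M Q : Mat n}

theorem UnifEllipticOperator.neg_quadForm_le (hF : UnifEllipticOperator lam Lam F)
    (hlam : 0 < lam) (hLam : 0 ≤ Lam) (hM : M.IsSymm) (hQ : Q.IsSymm) (hle : F M ≤ F (M + Q))
    {t : ℝ} (ht : 0 ≤ t) (hQt : ∀ z, quadForm Q z ≤ t * ‖z‖ ^ 2) (z : En n) :
    -quadForm Q z ≤ Lam / lam * t * ‖z‖ ^ 2 := by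
  have hone : (t • (1 : Mat n)).IsSymm := Matrix.isSymm_one.smul t
  have hone_pos : (t • (1 : Mat n)).PosSemidef := posSemidef_of_quadForm_nonneg hone fun z ↦ by
    rw [quadForm_smul, quadForm_one]
    positivity
  have hsub_pos : (t • (1 : Mat n) - Q).PosSemidef :=
    posSemidef_of_quadForm_nonneg (hone.sub hQ) fun z ↦ by
      rw [quadForm_sub, quadForm_smul, quadForm_one]
      linarith [hQt z]
  have hlower := (hF (M + Q) _ (hM.add hQ) (hone.sub hQ) hsub_pos).1
  have hupper := (hF M _ hM hone hone_pos).2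
  rw [add_add_sub_cancel] at hlower
  have hnorm : opNorm (t • (1 : Mat n) - Q) ≤ Lam / lam * t := by
    rw [div_mul_eq_mul_div, le_div_iff₀ hlam]
    linarith [mul_le_mul_of_nonneg_left (opNorm_smul_one_le (n := n) ht) hLam]
  have hquad := (le_abs_self _).trans (abs_quadForm_le (t • (1 : Mat n) - Q) z)
  rw [quadForm_sub, quadForm_smul, quadForm_one] at hquad
  have : 0 ≤ t * ‖z‖ ^ 2 := by positivity
  linarith [mul_le_mul_of_nonneg_right hnorm (sq_nonneg ‖z‖)]

theorem UnifEllipticOperator.opNorm_le (hF : UnifEllipticOperator lam Lam F)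
    (hlam : 0 < lam) (hLam : 0 ≤ Lam) (hM : M.IsSymm) (hQ : Q.IsSymm) (hle : F M ≤ F (M + Q))
    {t : ℝ} (ht : 0 ≤ t) (hQt : ∀ z, quadForm Q z ≤ t * ‖z‖ ^ 2) :
    opNorm Q ≤ (1 + Lam / lam) * t := by
  refine opNorm_le_of_abs_quadForm_le hQ (by positivity) fun z ↦ abs_le'.2 ⟨?_, ?_⟩
  · have : 0 ≤ Lam / lam * t * ‖z‖ ^ 2 := by positivity
    linarith [hQt z]
  · have : 0 ≤ t * ‖z‖ ^ 2 := by positivity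
    linarith [hF.neg_quadForm_le hlam hLam hM hQ hle ht hQt z]

/-- A direction `e` off the net costs at most `2‖Q‖‖e - e'‖`, which the choice of the mesh allows to
absorb into the left-hand side. -/
theorem UnifEllipticOperator.opNorm_le_of_net (hF : UnifEllipticOperator lam Lam F)
    (hlam : 0 < lam) (hLam : 0 ≤ Lam) (hM : M.IsSymm) (hQ : Q.IsSymm) (hle : F M ≤ F (M + Q))
    {N : Set (En n)} (hN : N ⊆ sphere 0 1)
    (hnet : sphere 0 1 ⊆ ⋃ e ∈ N, ball e (1 / (4 * (1 + Lam / lam))))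
    {s : ℝ} (hs : 0 ≤ s) (hQs : ∀ e ∈ N, quadForm Q e ≤ s) :
    opNorm Q ≤ 2 * (1 + Lam / lam) * s := by
  have hQ₀ := opNorm_nonneg Q
  have hunit : ∀ z ∈ sphere (0 : En n) 1,
      quadForm Q z ≤ s + 2 * opNorm Q * (1 / (4 * (1 + Lam / lam))) := fun z hz ↦ by
    obtain ⟨e, he, hze⟩ := mem_iUnion₂.1 (hnet hz)
    rw [mem_ball_iff_norm] at hze
    calc quadForm Q z ≤ quadForm Q e + 2 * opNorm Q * ‖z - e‖ :=
          quadForm_le_add_mul_norm_sub Q (mem_sphere_zero_iff_norm.1 hz)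
            (mem_sphere_zero_iff_norm.1 (hN he))
      _ ≤ _ := by gcongr; exact hQs e he
  have hopNorm := hF.opNorm_le hlam hLam hM hQ hle (by positivity) (quadForm_le_mul_norm_sq hunit)
  have habsorb : (1 + Lam / lam) * (s + 2 * opNorm Q * (1 / (4 * (1 + Lam / lam)))) =
      (1 + Lam / lam) * s + opNorm Q / 2 := by
    field_simp
    ring
  linarith

end Ellipticity

section SecondDifference

variable {E : Type*} [NormedAddCommGroup E] [NormedSpace ℝ E]

theorem exists_pos_norm_smul_lt (e : E) {δ : ℝ} (hδ : 0 < δ) : ∃ h > (0 : ℝ), ‖h • e‖ < δ := by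
  refine ⟨δ / (‖e‖ + 1), by positivity, ?_⟩
  rw [norm_smul, Real.norm_of_nonneg (by positivity), div_mul_eq_mul_div,
    div_lt_iff₀ (by positivity)]
  linarith

theorem exists_abs_secondDiff_sub_le {u : E → ℝ} {U K : Set E} (hU : IsOpen U)
    (hu : ∀ x ∈ U, ContDiffAt ℝ 2 u x) (hK : IsCompact K) (hKU : K ⊆ U) (e : E) {ε δ : ℝ}
    (hε : 0 < ε) (hδ : 0 < δ) :
    ∃ h > 0, ‖h • e‖ < δ ∧
      ∀ x ∈ K, |secondDiff u (h • e) x - h ^ 2 * secondDeriv u x e| ≤ h ^ 2 * ε := by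
  have hcont : ∀ x ∈ K, ContinuousAt (fun y ↦ secondDeriv u y e) x := fun x hx ↦
    (continuousOn_secondDeriv hu e).continuousAt (hU.mem_nhds (hKU hx))
  obtain ⟨δ₁, hδ₁, hunif⟩ := Metric.mem_uniformity_dist.1
    (hK.uniformContinuousAt_of_continuousAt _ hcont (Metric.dist_mem_uniformity hε))
  obtain ⟨δ₂, hδ₂, hthick⟩ := hK.exists_thickening_subset_open hU hKU
  obtain ⟨h, hh, hhe⟩ := exists_pos_norm_smul_lt e (lt_min hδ (lt_min hδ₁ hδ₂))
  refine ⟨h, hh, hhe.trans_le (min_le_left _ _), fun x hx ↦ ?_⟩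
  have hdist : ∀ s ∈ Icc (-1 : ℝ) 1, dist x (x + s • h • e) < min δ₁ δ₂ := fun s hs ↦ by
    rw [dist_self_add_right, norm_smul]
    exact (mul_le_of_le_one_left (norm_nonneg _) (abs_le.2 hs)).trans_lt
      (hhe.trans_le (min_le_right _ _))
  have hmem : ∀ s ∈ Icc (-1 : ℝ) 1, ContDiffAt ℝ 2 u (x + s • h • e) := fun s hs ↦
    hu _ <| hthick <| mem_thickening_iff.2
      ⟨x, hx, (dist_comm _ _).trans_lt ((hdist s hs).trans_le (min_le_right _ _))⟩
  have hclose : ∀ s ∈ Icc (-1 : ℝ) 1,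
      |secondDeriv u x e - secondDeriv u (x + s • h • e) e| < ε := fun s hs ↦
    hunif ((hdist s hs).trans_le (min_le_left _ _)) hx
  have hupper := secondDiff_le_of_secondDeriv_le hmem (S := h ^ 2 * (secondDeriv u x e + ε))
    fun s hs ↦ by
      rw [secondDeriv_smul]
      gcongr
      linarith [(abs_lt.1 (hclose s hs)).1]
  have hlower := le_secondDiff_of_le_secondDeriv hmem (m := h ^ 2 * (secondDeriv u x e - ε))
    fun s hs ↦ by
      rw [secondDeriv_smul]
      gcongr
      linarith [(abs_lt.1 (hclose s hs)).2]
  exact abs_le.2 ⟨by linarith, by linarith⟩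

end SecondDifference

section EvansKrylov

variable {n : ℕ} {lam Lam c r : ℝ} {F : Mat n → ℝ} {u : En n → ℝ} {U V : Set (En n)}

/-- `u` is a classical solution of `F(D²u) = c` on `U`. -/
structure IsC2SolutionOn (F : Mat n → ℝ) (c : ℝ) (u : En n → ℝ) (U : Set (En n)) : Prop where
  contDiffAt : ∀ x ∈ U, ContDiffAt ℝ 2 u x
  apply_hessian : ∀ x ∈ U, F (hessian u x) = c

theorem IsC2SolutionOn.mono (hu : IsC2SolutionOn F c u U) (hVU : V ⊆ U) :
    IsC2SolutionOn F c u V :=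
  ⟨fun x hx ↦ hu.contDiffAt x (hVU hx), fun x hx ↦ hu.apply_hessian x (hVU hx)⟩

/-- By concavity `F ≥ c` at the average of the Hessians at `x ± p`, so ellipticity bounds the
negative part of the difference between that average and `D²u(x)` by its positive part. -/
theorem IsC2SolutionOn.isSupersolutionAt (hu : IsC2SolutionOn F c u U) (hlam : 0 < lam)
    (hLam : 0 ≤ Lam) (hconc : ConcaveOnSym F) (hF : UnifEllipticOperator lam Lam F) (S : ℝ)
    {p x : En n} (hx : x ∈ U) (hp : x + p ∈ U) (hm : x - p ∈ U) :
    IsSupersolutionAt (Lam / lam) (fun y ↦ S - secondDiff u p y) x := by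
  have hcx := hu.contDiffAt x hx
  have hcp := hu.contDiffAt _ hp
  have hcm := hu.contDiffAt _ hm
  have hdiff := contDiffAt_secondDiff hcx hcp hcm
  set A := (1 / 2 : ℝ) • hessian u (x + p) + (1 - 1 / 2 : ℝ) • hessian u (x - p)
  have hA : A.IsSymm := ((isSymm_hessian hcp).smul _).add ((isSymm_hessian hcm).smul _)
  have hderiv (z : En n) : secondDeriv (fun y ↦ S - secondDiff u p y) x z =
      -2 * quadForm (A - hessian u x) z := by
    rw [secondDeriv_const_sub hdiff, secondDeriv_secondDiff hcx hcp hcm, quadForm_sub, quadForm_add,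
      quadForm_smul, quadForm_smul, quadForm_hessian hcx, quadForm_hessian hcp,
      quadForm_hessian hcm]
    ring
  have hFA : F (hessian u x) ≤ F (hessian u x + (A - hessian u x)) := by
    have : _ ≤ F A := hconc _ _ (isSymm_hessian hcp) (isSymm_hessian hcm) (1 / 2) (by norm_num)
    rw [hu.apply_hessian _ hp, hu.apply_hessian _ hm] at this
    rw [add_sub_cancel, hu.apply_hessian x hx]
    linarith
  refine ⟨contDiffAt_const.sub hdiff, fun t ht hlow z ↦ ?_⟩
  have := hF.neg_quadForm_le hlam hLam (isSymm_hessian hcx) (hA.sub (isSymm_hessian hcx)) hFA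
    (t := t / 2) (by positivity) (fun z ↦ by
      have := hlow z
      rw [hderiv] at this
      linarith) z
  rw [hderiv]
  linarith

theorem IsC2SolutionOn.const_sub_secondDiff_nonneg (hu : IsC2SolutionOn F c u (ball 0 r))
    {e : En n} {S h : ℝ} (hS : ∀ x ∈ ball 0 r, secondDeriv u x e ≤ S) {x : En n}
    (hx : ‖x‖ + ‖h • e‖ < r) : 0 ≤ h ^ 2 * S - secondDiff u (h • e) x := by
  have hmem : ∀ s ∈ Icc (-1 : ℝ) 1, x + s • h • e ∈ ball (0 : En n) r := fun s hs ↦ by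
    rw [mem_ball_zero_iff]
    refine (norm_add_le _ _).trans_lt (lt_of_le_of_lt ?_ hx)
    rw [norm_smul s]
    gcongr
    exact mul_le_of_le_one_left (norm_nonneg _) (abs_le.2 hs)
  refine sub_nonneg.2 <| secondDiff_le_of_secondDeriv_le
    (fun s hs ↦ hu.contDiffAt _ (hmem s hs)) fun s hs ↦ ?_
  rw [secondDeriv_smul]
  gcongr
  exact hS _ (hmem s hs)

theorem exists_secondDeriv_le_sub (n : ℕ) (hlam : 0 < lam) (hLam : 0 ≤ Lam) {η : ℝ} (hη : 0 < η) :
    ∃ κ > 0, ∀ F : Mat n → ℝ, ConcaveOnSym F → UnifEllipticOperator lam Lam F →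
      ∀ (c : ℝ) (u : En n → ℝ) (r : ℝ), 0 < r → IsC2SolutionOn F c u (ball 0 r) →
      ∀ (e : En n) (S c₀ : ℝ), (∀ x ∈ ball 0 r, secondDeriv u x e ≤ S) →
        η * volume.real (ball (0 : En n) (r / 10)) ≤
          volume.real {x ∈ ball (0 : En n) (r / 10) | c₀ ≤ S - secondDeriv u x e} →
        ∀ x ∈ ball 0 (r / 20), secondDeriv u x e ≤ S - κ * c₀ := by
  obtain ⟨κ, hκ, hharnack⟩ := weak_harnack (E := En n) volume (L := Lam / lam) (by positivity) hη
  refine ⟨κ, hκ, fun F hconc hF c u r hr hu e S c₀ hS hmeas x hx ↦ ?_⟩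
  suffices ∀ ε > 0, κ * (c₀ - ε) ≤ S - secondDeriv u x e + ε by
    refine le_of_forall_pos_le_add fun ε hε ↦ ?_
    have hε' := this (ε / (1 + κ)) (by positivity)
    have : (1 + κ) * (ε / (1 + κ)) = ε := mul_div_cancel₀ _ (by positivity)
    linarith
  intro ε hε
  obtain ⟨h, hh, he, hclose⟩ := exists_abs_secondDiff_sub_le isOpen_ball hu.contDiffAt
    (isCompact_closedBall 0 (r / 10)) (closedBall_subset_ball (by linarith)) e hε (half_pos hr)
  have hh₂ : 0 < h ^ 2 := pow_pos hh 2
  have hmem : ∀ y ∈ ball (0 : En n) (5 * (r / 10)), ‖y‖ + ‖h • e‖ < r := fun y hy ↦ by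
    linarith [mem_ball_zero_iff.1 hy]
  have hlower := hharnack 0 (r / 10) (by positivity) (fun y ↦ h ^ 2 * S - secondDiff u (h • e) y)
    (fun y hy ↦ hu.isSupersolutionAt hlam hLam hconc hF _
      (ball_subset_ball (by linarith) hy)
      (mem_ball_zero_iff.2 ((norm_add_le _ _).trans_lt (hmem y hy)))
      (mem_ball_zero_iff.2 ((norm_sub_le _ _).trans_lt (hmem y hy))))
    (fun y hy ↦ hu.const_sub_secondDiff_nonneg hS (hmem y hy)) (h ^ 2 * (c₀ - ε))
    (hmeas.trans <| measureReal_mono (fun y ⟨hy, hyc⟩ ↦ ⟨hy, by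
        have := (abs_le.1 (hclose y (ball_subset_closedBall hy))).2
        linarith [mul_le_mul_of_nonneg_left hyc hh₂.le]⟩)
      (measure_ne_top_of_subset (sep_subset _ _) measure_ball_lt_top.ne))
    x (by rwa [div_div, show (10 : ℝ) * 2 = 20 by norm_num])
  have hupper := (abs_le.1 (hclose x (mem_closedBall_zero_iff.2
    (by linarith [mem_ball_zero_iff.1 hx])))).1
  refine le_of_mul_le_mul_left ?_ hh₂
  linarith

theorem exists_le_measureReal_of_subset_biUnion {α ι : Type*} [MeasurableSpace α] {μ : Measure α}
    {N : Finset ι} {A : Set α} {V : ι → Set α} (hA : A.Nonempty) (hAV : A ⊆ ⋃ e ∈ N, V e)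
    (hV : ∀ e ∈ N, μ (V e) ≠ ∞) : ∃ e ∈ N, (N.card + 1 : ℝ)⁻¹ * μ.real A ≤ μ.real (V e) := by
  have hN : N.Nonempty := by
    obtain ⟨x, hx⟩ := hA
    obtain ⟨e, he, -⟩ := mem_iUnion₂.1 (hAV hx)
    exact ⟨e, he⟩
  have hfin : μ (⋃ e ∈ N, V e) ≠ ∞ :=
    (measure_biUnion_lt_top N.finite_toSet fun e he ↦ (hV e he).lt_top).ne
  refine Finset.exists_le_of_sum_le hN ?_
  calc ∑ _e ∈ N, (N.card + 1 : ℝ)⁻¹ * μ.real A = (N.card / (N.card + 1) : ℝ) * μ.real A := by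
        rw [Finset.sum_const, nsmul_eq_mul]
        ring
    _ ≤ μ.real A := mul_le_of_le_one_left measureReal_nonneg
        (div_le_one_of_le₀ (by linarith) (by positivity))
    _ ≤ ∑ e ∈ N, μ.real (V e) :=
        (measureReal_mono hAV hfin).trans (measureReal_biUnion_finset_le _ _)

theorem IsC2SolutionOn.exists_lt_secondDeriv_sub (hu : IsC2SolutionOn F c u U) (hlam : 0 < lam)
    (hLam : 0 ≤ Lam) (hF : UnifEllipticOperator lam Lam F) {N : Set (En n)} (hN : N ⊆ sphere 0 1)
    (hnet : sphere 0 1 ⊆ ⋃ e ∈ N, ball e (1 / (4 * (1 + Lam / lam)))) {s : ℝ} (hs : 0 ≤ s)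
    {x y : En n} (hx : x ∈ U) (hy : y ∈ U)
    (hlt : 2 * (1 + Lam / lam) * s < opNorm (hessian u y - hessian u x)) :
    ∃ e ∈ N, s < secondDeriv u y e - secondDeriv u x e := by
  by_contra! hle
  have hcx := hu.contDiffAt x hx
  have hcy := hu.contDiffAt y hy
  refine hlt.not_ge <| hF.opNorm_le_of_net hlam hLam (isSymm_hessian hcx)
    ((isSymm_hessian hcy).sub (isSymm_hessian hcx)) ?_ hN hnet hs fun e he ↦ ?_
  · rw [add_sub_cancel, hu.apply_hessian x hx, hu.apply_hessian y hy]
  · rw [quadForm_sub, quadForm_hessian hcy, quadForm_hessian hcx]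
    exact hle e he

theorem exists_direction_secondDeriv_le_sub (hlam : 0 < lam) (hLam : 0 ≤ Lam)
    {N : Finset (En n)} (hN : (N : Set (En n)) ⊆ sphere 0 1)
    (hnet : sphere 0 1 ⊆ ⋃ e ∈ (N : Set (En n)), ball e (1 / (4 * (1 + Lam / lam)))) :
    ∃ κ > 0, ∀ F : Mat n → ℝ, ConcaveOnSym F → UnifEllipticOperator lam Lam F →
      ∀ (c : ℝ) (u : En n → ℝ) (r : ℝ), IsC2SolutionOn F c u (ball 0 r) →
      ∀ S : En n → ℝ, (∀ e ∈ N, ∀ x ∈ ball 0 r, secondDeriv u x e ≤ S e) →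
      ∀ σ ≥ 0, ∀ x₁ ∈ ball 0 r, ∀ x₂ ∈ ball 0 r, σ < opNorm (hessian u x₁ - hessian u x₂) →
        ∃ e ∈ N, ∀ x ∈ ball 0 (r / 20), secondDeriv u x e ≤ S e - κ * σ := by
  obtain ⟨κ, hκ, hdrop⟩ := exists_secondDeriv_le_sub n hlam hLam (η := (N.card + 1 : ℝ)⁻¹)
    (by positivity)
  refine ⟨κ / (4 * (1 + Lam / lam)), by positivity,
    fun F hconc hF c u r hu S hS σ hσ x₁ hx₁ x₂ hx₂ hlt ↦ ?_⟩
  have hr : 0 < r := pos_of_mem_ball hx₁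
  set s := σ / (4 * (1 + Lam / lam)) with hs
  have hσs : σ = 4 * (1 + Lam / lam) * s := by
    rw [hs]
    field_simp
  have hcover : ball (0 : En n) (r / 10) ⊆
      ⋃ e ∈ N, {x ∈ ball 0 (r / 10) | s ≤ S e - secondDeriv u x e} := fun x hx ↦ by
    have hxr : x ∈ ball 0 r := ball_subset_ball (by linarith) hx
    obtain ⟨y, hy, hlty⟩ : ∃ y ∈ ball 0 r, σ / 2 < opNorm (hessian u y - hessian u x) := by
      by_contra! hle
      have := opNorm_sub_le (hessian u x₁ - hessian u x) (hessian u x₂ - hessian u x)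
      rw [sub_sub_sub_cancel_right] at this
      linarith [hle x₁ hx₁, hle x₂ hx₂]
    obtain ⟨e, he, hlte⟩ := hu.exists_lt_secondDeriv_sub hlam hLam hF hN hnet (s := s)
      (by positivity) hxr hy (by linarith)
    exact mem_iUnion₂.2 ⟨e, he, hx, by linarith [hS e he y hy]⟩
  obtain ⟨e, he, hmeas⟩ := exists_le_measureReal_of_subset_biUnion (μ := volume)
    (nonempty_ball.2 (by positivity)) hcover
    fun e _ ↦ measure_ne_top_of_subset (sep_subset _ _) measure_ball_lt_top.ne
  refine ⟨e, he, ?_⟩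
  rw [div_mul_eq_mul_div, mul_div_assoc]
  exact hdrop F hconc hF c u r hr hu e (S e) s (hS e he) hmeas

theorem mul_le_card_mul_of_forall_exists_le_sub {α ι : Type*} {N : Finset ι} {f : ι → α → ℝ}
    {B : ℕ → Set α} {x₀ : α} {d τ : ℝ} (hx₀ : ∀ k, x₀ ∈ B k) (hB : Antitone B)
    (hd : ∀ e ∈ N, ∀ x ∈ B 0, f e x ≤ f e x₀ + d) {K : ℕ}
    (hdrop : ∀ k < K, ∀ S : ι → ℝ, (∀ e ∈ N, ∀ x ∈ B k, f e x ≤ S e) →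
      ∃ e ∈ N, ∀ x ∈ B (k + 1), f e x ≤ S e - τ) :
    K * τ ≤ N.card * d := by
  classical
  have hbounds : ∀ k ≤ K, ∃ S : ι → ℝ, (∀ e ∈ N, ∀ x ∈ B k, f e x ≤ S e) ∧
      ∑ e ∈ N, S e ≤ ∑ e ∈ N, (f e x₀ + d) - k * τ := fun k ↦ by
    induction k with
    | zero => exact fun _ ↦ ⟨fun e ↦ f e x₀ + d, hd, by simp⟩
    | succ k ih =>
      intro hk
      obtain ⟨S, hS, hsum⟩ := ih (by lia)
      obtain ⟨e₀, he₀, hS'⟩ := hdrop k (by lia) S hS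
      refine ⟨Function.update S e₀ (S e₀ - τ), fun e he x hx ↦ ?_, ?_⟩
      · obtain rfl | hne := eq_or_ne e e₀
        · simpa using hS' x hx
        · simpa [hne] using hS e he x (hB k.le_succ hx)
      · rw [Finset.sum_update_of_mem he₀, ← Finset.erase_eq]
        push_cast
        linarith [Finset.add_sum_erase N S he₀]
  obtain ⟨S, hS, hsum⟩ := hbounds K le_rfl
  have hlower : ∑ e ∈ N, f e x₀ ≤ ∑ e ∈ N, S e :=
    Finset.sum_le_sum fun e he ↦ hS e he x₀ (hx₀ K)
  rw [Finset.sum_add_distrib, Finset.sum_const, nsmul_eq_mul] at hsum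
  linarith

theorem IsC2SolutionOn.secondDeriv_le_add (hu : IsC2SolutionOn F c u U) {d : ℝ}
    (hd : ∀ x ∈ U, ∀ y ∈ U, opNorm (hessian u x - hessian u y) ≤ d) {e : En n} (he : ‖e‖ = 1)
    {x y : En n} (hx : x ∈ U) (hy : y ∈ U) : secondDeriv u x e ≤ secondDeriv u y e + d := by
  have hquad := (le_abs_self _).trans (abs_quadForm_le (hessian u x - hessian u y) e)
  rw [quadForm_sub, quadForm_hessian (hu.contDiffAt x hx), quadForm_hessian (hu.contDiffAt y hy),
    he] at hquad
  linarith [hd x hx y hy]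

theorem exists_mul_le_card_mul_of_lt_opNorm (hlam : 0 < lam) (hLam : 0 ≤ Lam)
    {N : Finset (En n)} (hN : (N : Set (En n)) ⊆ sphere 0 1)
    (hnet : sphere 0 1 ⊆ ⋃ e ∈ (N : Set (En n)), ball e (1 / (4 * (1 + Lam / lam)))) :
    ∃ κ > 0, ∀ F : Mat n → ℝ, ConcaveOnSym F → UnifEllipticOperator lam Lam F →
      ∀ (c : ℝ) (u : En n → ℝ) (d : ℝ), IsC2SolutionOn F c u (ball 0 1) →
      (∀ x ∈ ball 0 1, ∀ y ∈ ball 0 1, opNorm (hessian u x - hessian u y) ≤ d) →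
      ∀ (K : ℕ), ∀ σ ≥ 0, ∀ x₁ ∈ ball 0 ((1 / 20) ^ K), ∀ x₂ ∈ ball 0 ((1 / 20) ^ K),
        σ < opNorm (hessian u x₁ - hessian u x₂) → K * (κ * σ) ≤ N.card * d := by
  obtain ⟨κ, hκ, hstep⟩ := exists_direction_secondDeriv_le_sub hlam hLam hN hnet
  refine ⟨κ, hκ, fun F hconc hF c u d hu hd K σ hσ x₁ hx₁ x₂ hx₂ hlt ↦ ?_⟩
  let B (k : ℕ) : Set (En n) := ball 0 ((1 / 20) ^ k)
  have hB : Antitone B := fun i j hij ↦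
    ball_subset_ball (pow_le_pow_of_le_one (by norm_num) (by norm_num) hij)
  have hB₀ : B 0 = ball 0 1 := by simp [B]
  rw [← hB₀] at hu hd
  refine mul_le_card_mul_of_forall_exists_le_sub (fun k ↦ mem_ball_self (by positivity)) hB
    (fun e he x hx ↦ hu.secondDeriv_le_add hd (mem_sphere_zero_iff_norm.1 (hN he)) hx
      (mem_ball_self (by positivity))) fun k hk S hS ↦ ?_
  rw [pow_succ, mul_one_div]
  exact hstep F hconc hF c u _ (hu.mono (hB k.zero_le)) S hS σ hσ x₁ (hB hk.le hx₁) x₂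
    (hB hk.le hx₂) hlt

theorem hessian_oscillation_decay_general (n : ℕ) {lam Lam : ℝ} (hlam : 0 < lam) (hLam : 0 ≤ Lam)
    {ε : ℝ} (hε : 0 < ε) :
    ∃ ρ₀ ∈ Ioo (0 : ℝ) 1, ∀ F : Mat n → ℝ, ConcaveOnSym F → UnifEllipticOperator lam Lam F →
      ∀ (u : En n → ℝ) (c d : ℝ), ContDiffOn ℝ 2 u (ball 0 1) →
        (∀ x ∈ ball 0 1, F (hessian u x) = c) →
        (∀ x ∈ ball 0 1, ∀ y ∈ ball 0 1, opNorm (hessian u x - hessian u y) ≤ d) →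
        ∀ x ∈ ball 0 ρ₀, ∀ y ∈ ball 0 ρ₀, opNorm (hessian u x - hessian u y) ≤ ε * d := by
  obtain ⟨N, hN, hNfin, hnet⟩ := (isCompact_sphere (0 : En n) 1).finite_cover_balls
    (show 0 < 1 / (4 * (1 + Lam / lam)) by positivity)
  lift N to Finset (En n) using hNfin
  obtain ⟨κ, hκ, hcount⟩ := exists_mul_le_card_mul_of_lt_opNorm hlam hLam hN hnet
  obtain ⟨K, hK⟩ := exists_nat_gt (N.card / (κ * ε))
  have hK₀ : K ≠ 0 := by
    rintro rfl
    exact (show (0 : ℝ) ≤ N.card / (κ * ε) by positivity).not_gt (by simpa using hK)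
  have hpow : (1 / 20 : ℝ) ^ K < 1 := pow_lt_one₀ (by norm_num) (by norm_num) hK₀
  refine ⟨(1 / 20) ^ K, ⟨by positivity, hpow⟩, fun F hconc hF u c d hu hFu hd x hx y hy ↦ ?_⟩
  by_contra! hlt
  have hle : opNorm (hessian u x - hessian u y) ≤ d :=
    hd x (ball_subset_ball hpow.le hx) y (ball_subset_ball hpow.le hy)
  have hd₀ : 0 ≤ d := (opNorm_nonneg _).trans hle
  have hd_pos : 0 < d := hd₀.lt_of_ne <| by
    rintro rfl
    exact (hle.trans_eq (mul_zero ε).symm).not_gt hlt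
  have hsol : IsC2SolutionOn F c u (ball 0 1) :=
    ⟨fun x hx ↦ hu.contDiffAt (isOpen_ball.mem_nhds hx), hFu⟩
  have := hcount F hconc hF c u d hsol hd K (ε * d) (by positivity) x hx y hy hlt
  rw [div_lt_iff₀ (by positivity)] at hK
  linarith [mul_lt_mul_of_pos_right hK hd_pos]

end EvansKrylov

/-- **Hessian oscillation decay (Evans–Krylov).** Let `F` be concave and uniformly elliptic
with `F(0) = 0`. There is `ρ₀ ∈ (0,1)` depending only on `n, λ, Λ` such that any `C²(B₁)`
solution of `F(D²u) = 0` whose Hessian map `𝓗 = D²u` satisfies `diam 𝓗(B₁) = 1` also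
satisfies `diam 𝓗(B_{ρ₀}) < 1/2`. -/
theorem hessian_oscillation_decay
    (n : ℕ) (hn : 2 ≤ n) (lam Lam : ℝ) (hlam : 0 < lam) (hLam : lam ≤ Lam) :
    ∃ ρ₀ : ℝ, ρ₀ ∈ Set.Ioo (0 : ℝ) 1 ∧
      ∀ (F : Mat n → ℝ), ConcaveOnSym F → F 0 = 0 → UnifEllipticOperator lam Lam F →
      ∀ u : En n → ℝ,
        ContDiffOn ℝ 2 u (ball (0 : En n) 1) →
        (∀ x ∈ ball (0 : En n) 1, F (hessian u x) = 0) →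
        hessDiam u (ball (0 : En n) 1) = 1 →
        hessDiam u (ball (0 : En n) ρ₀) < 1 / 2 := by
  obtain ⟨ρ₀, hρ₀, hdecay⟩ := hessian_oscillation_decay_general n hlam (hlam.le.trans hLam)
    (ε := 1 / 4) (by norm_num)
  refine ⟨ρ₀, hρ₀, fun F hconc _ hF u hu hFu hdiam ↦ ?_⟩
  have hosc : ∀ x ∈ ball 0 1, ∀ y ∈ ball 0 1, opNorm (hessian u x - hessian u y) ≤ 1 :=
    fun x hx y hy ↦ hdiam ▸ opNorm_hessian_sub_le_hessDiam (by simp [hdiam]) hx hy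
  have hsmall : hessDiam u (ball 0 ρ₀) ≤ 1 / 4 * 1 :=
    hessDiam_le (by norm_num) (hdecay F hconc hF u 0 1 hu hFu hosc)
  linarith
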